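/- arXiv:2107.09013 — 12 statements merged into one kernel-verified Lean document; each statement's English description precedes it below -/
import Mathlib

section
/- Let D be a cube-free positive integer. If some prime ℓ with ℓ ≡ 2 (mod 3) divides D, then the set X_1^D(ℤ)* is empty. -/
/-- `X_1^D(ℤ)`: triples `(x,y,z)` with `xyz ≠ 0`, `x² + 27y² = 4z³`, `gcd(y,z) = D`. -/
def X1D (D : ℕ) : Set (ℤ × ℤ × ℤ) :=
  {q | q.1 * q.2.1 * q.2.2 ≠ 0 ∧ q.1 ^ 2 + 27 * q.2.1 ^ 2 = 4 * q.2.2 ^ 3 ∧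
    Int.gcd q.2.1 q.2.2 = D}

/-- `X_1^D(ℤ)*`: members of `X_1^D(ℤ)` such that `ℓ² ∣ D → ℓ³ ∤ y` for every prime `ℓ`. -/
def X1Dstar (D : ℕ) : Set (ℤ × ℤ × ℤ) :=
  {q | q ∈ X1D D ∧ ∀ ℓ : ℕ, ℓ.Prime → ℓ ^ 2 ∣ D → ¬ ((ℓ : ℤ) ^ 3 ∣ q.2.1)}

/-- `X_D^1(ℤ)`: triples `(x,y,z)` with `xyz ≠ 0`, `x² + 27y² = 4Dz³`, `gcd(y,z) = 1`. -/
def XD1 (D : ℕ) : Set (ℤ × ℤ × ℤ) :=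
  {q | q.1 * q.2.1 * q.2.2 ≠ 0 ∧ q.1 ^ 2 + 27 * q.2.1 ^ 2 = 4 * (D : ℤ) * q.2.2 ^ 3 ∧
    Int.gcd q.2.1 q.2.2 = 1}

/-- `X_D^1(ℤ)*`: members of `X_D^1(ℤ)` such that `ℓ² ∣ D → ℓ ∤ y` for every prime `ℓ`. -/
def XD1star (D : ℕ) : Set (ℤ × ℤ × ℤ) :=
  {q | q ∈ XD1 D ∧ ∀ ℓ : ℕ, ℓ.Prime → ℓ ^ 2 ∣ D → ¬ ((ℓ : ℤ) ∣ q.2.1)}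

/-- `Y_D^1(ℤ)`: triples `(x,y,z)` with `xyz ≠ 0`, `x² + 3y² = 4Dz³`, `gcd(y,z) = 1`. -/
def YD1 (D : ℕ) : Set (ℤ × ℤ × ℤ) :=
  {q | q.1 * q.2.1 * q.2.2 ≠ 0 ∧ q.1 ^ 2 + 3 * q.2.1 ^ 2 = 4 * (D : ℤ) * q.2.2 ^ 3 ∧
    Int.gcd q.2.1 q.2.2 = 1}

/-- `Y_D^1(ℤ)*`: members of `Y_D^1(ℤ)` such that `ℓ² ∣ D → ℓ ∤ y` for every prime `ℓ`. -/
def YD1star (D : ℕ) : Set (ℤ × ℤ × ℤ) :=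
  {q | q ∈ YD1 D ∧ ∀ ℓ : ℕ, ℓ.Prime → ℓ ^ 2 ∣ D → ¬ ((ℓ : ℤ) ∣ q.2.1)}

/-- A natural number is cube-free if no prime cube divides it. -/
def Cubefree (D : ℕ) : Prop := ∀ p : ℕ, p.Prime → ¬ p ^ 3 ∣ D

/-- `D` is admissible when it is a positive cube-free integer of the form `D₁` or `9·D₁`,
where `D₁ = 1` or every prime factor of `D₁` is `≡ 1 (mod 3)`. -/
def Admissible (D : ℕ) : Prop :=
  0 < D ∧ Cubefree D ∧
    ∃ D₁ : ℕ, (D = D₁ ∨ D = 9 * D₁) ∧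
      (D₁ = 1 ∨ ∀ p : ℕ, p.Prime → p ∣ D₁ → p % 3 = 1)

/-- the level-raising map `[p]⁺` for `p = u² + 3v²`. -/
def pRaisePlus (u v : ℤ) (q : ℤ × ℤ × ℤ) : ℤ × ℤ × ℤ :=
  (u * q.1 + 3 * v * q.2.1, u * q.2.1 - v * q.1, q.2.2)

/-- the level-raising map `[p]⁻` for `p = u² + 3v²`. -/
def pRaiseMinus (u v : ℤ) (q : ℤ × ℤ × ℤ) : ℤ × ℤ × ℤ :=
  (u * q.1 - 3 * v * q.2.1, u * q.2.1 + v * q.1, q.2.2)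

open Classical in
/-- the level-lowering map `[p]_*` for `p = u² + 3v²`. -/
noncomputable def pLower (p u v : ℤ) (q : ℤ × ℤ × ℤ) : ℤ × ℤ × ℤ :=
  if p ∣ (u * q.2.1 + v * q.1) then
    ((u * q.1 - 3 * v * q.2.1) / p, (u * q.2.1 + v * q.1) / p, q.2.2)
  else
    ((u * q.1 + 3 * v * q.2.1) / p, (u * q.2.1 - v * q.1) / p, q.2.2)

/-!
Since `x ≡ y (mod 2)`, the equation `x² + 27y² = 4z³` says that `z³` is the value of the norm form
`N(u, v) = u² + uv + v²` of the Eisenstein integers at `v = 3y` and some integer `u`. A prime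
`ℓ ≡ 2 (mod 3)` is inert there: modulo `ℓ` cubing is injective and
`u³ - v³ = (u - v) N(u, v)`, so `ℓ ∣ N(u, v)` forces `u ≡ v`, then `3u² ≡ 0`, and hence `ℓ ∣ u`
and `ℓ ∣ v`; this covers `ℓ = 2` too. Consequently the `ℓ`-adic valuation of `z³ = N(u, v)` is even
as well as a multiple of `3`; once `ℓ ∣ z` it is at least `6`, which gives `ℓ² ∣ z` and `ℓ³ ∣ y`.
Then `ℓ² ∣ D`, contrary to the condition defining `X_1^D(ℤ)*`.
-/

theorem pow_left_injective_of_coprime_card_sub_one {F : Type*} [GroupWithZero F] [Finite F] {n : ℕ}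
    (hn : n ≠ 0) (hcop : (Nat.card F - 1).Coprime n) :
    Function.Injective fun a : F ↦ a ^ n := by
  intro a b hab
  have hab : a ^ n = b ^ n := hab
  rcases eq_or_ne a 0 with rfl | ha
  · exact (eq_zero_of_pow_eq_zero (hab.symm.trans (zero_pow hn))).symm
  have hb : b ≠ 0 := by
    rintro rfl
    exact pow_ne_zero n ha (hab.trans (zero_pow hn))
  have hcop' : (Nat.card Fˣ).Coprime n := by rwa [Nat.card_units]
  have hunits : Units.mk0 a ha = Units.mk0 b hb :=
    (powCoprime hcop').injective (Units.ext hab)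
  exact congrArg Units.val hunits

section EisensteinNorm

variable {R : Type*} [CommRing R]

/-- The norm form `u² + uv + v²` of the Eisenstein integers: the norm of `u - vω` down from
`R[ω]`, where `ω² + ω + 1 = 0`. -/
def eisensteinNorm (u v : R) : R := u ^ 2 + u * v + v ^ 2

theorem eisensteinNorm_mul_mul (p u v : R) :
    eisensteinNorm (p * u) (p * v) = p ^ 2 * eisensteinNorm u v := by
  unfold eisensteinNorm
  ring

theorem sub_mul_eisensteinNorm (u v : R) : (u - v) * eisensteinNorm u v = u ^ 3 - v ^ 3 := by
  unfold eisensteinNorm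
  ring

theorem eisensteinNorm_eq_zero_iff [NoZeroDivisors R] (h3 : (3 : R) ≠ 0)
    (hcube : Function.Injective fun a : R ↦ a ^ 3) {u v : R} :
    eisensteinNorm u v = 0 ↔ u = 0 ∧ v = 0 := by
  constructor
  · intro h
    obtain rfl : u = v := hcube (sub_eq_zero.1 (by rw [← sub_mul_eisensteinNorm, h, mul_zero]))
    have hu : 3 * u ^ 2 = 0 := by
      rw [← h, eisensteinNorm]
      ring
    have hu : u = 0 := eq_zero_of_pow_eq_zero ((mul_eq_zero.1 hu).resolve_left h3)
    exact ⟨hu, hu⟩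
  · rintro ⟨rfl, rfl⟩
    simp [eisensteinNorm]

/-- `p` behaves like a prime that stays inert in the Eisenstein integers: the norm form is
anisotropic modulo `p`. Units satisfy this as well. -/
def EisensteinInert (p : R) : Prop :=
  ∀ ⦃u v : R⦄, p ∣ eisensteinNorm u v → p ∣ u ∧ p ∣ v

namespace EisensteinInert

variable {p : R}

theorem not_dvd_three (hinert : EisensteinInert p) (hp : ¬IsUnit p) : ¬p ∣ 3 := by
  intro h
  have h11 : eisensteinNorm (1 : R) 1 = 3 := by
    unfold eisensteinNorm
    norm_num
  exact hp (isUnit_of_dvd_one (hinert (h11 ▸ h)).1)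

variable [IsDomain R]

theorem pow_succ_dvd (hinert : EisensteinInert p) (hp : p ≠ 0) {n : ℕ} {u v : R}
    (h : p ^ (2 * n + 1) ∣ eisensteinNorm u v) : p ^ (n + 1) ∣ u ∧ p ^ (n + 1) ∣ v := by
  induction n generalizing u v with
  | zero => simpa using hinert (by simpa using h)
  | succ n ih =>
    obtain ⟨⟨u, rfl⟩, ⟨v, rfl⟩⟩ := hinert ((dvd_pow_self p (by lia)).trans h)
    rw [eisensteinNorm_mul_mul, show 2 * (n + 1) + 1 = 2 + (2 * n + 1) by ring, pow_add,
      mul_dvd_mul_iff_left (pow_ne_zero 2 hp)] at h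
    obtain ⟨hu, hv⟩ := ih h
    rw [pow_succ' p (n + 1)]
    exact ⟨mul_dvd_mul_left p hu, mul_dvd_mul_left p hv⟩

theorem pow_dvd_of_eisensteinNorm_eq_cube (hinert : EisensteinInert p) (hp : Prime p)
    {u v z : R} (h : eisensteinNorm u v = z ^ 3) (hz : p ∣ z) :
    p ^ 2 ∣ z ∧ p ^ 3 ∣ u ∧ p ^ 3 ∣ v := by
  have hsq : p ^ 2 ∣ z := by
    have hcube : p ^ (2 * 1 + 1) ∣ eisensteinNorm u v := h ▸ pow_dvd_pow_of_dvd hz 3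
    obtain ⟨⟨u', rfl⟩, ⟨v', rfl⟩⟩ := hinert.pow_succ_dvd hp.ne_zero hcube
    obtain ⟨w, rfl⟩ := hz
    have hw : w ^ 3 = p * eisensteinNorm u' v' := by
      rw [eisensteinNorm_mul_mul] at h
      apply mul_left_cancel₀ (pow_ne_zero 3 hp.ne_zero)
      linear_combination -h
    rw [pow_two]
    exact mul_dvd_mul_left p (hp.dvd_of_dvd_pow (Dvd.intro _ hw.symm))
  have hsixth : p ^ 6 ∣ eisensteinNorm u v := by
    rw [h, show 6 = 2 * 3 by rfl, pow_mul]
    exact pow_dvd_pow_of_dvd hsq 3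
  exact ⟨hsq, hinert.pow_succ_dvd hp.ne_zero (n := 2) ((pow_dvd_pow p (by lia)).trans hsixth)⟩

end EisensteinInert

end EisensteinNorm

theorem eisensteinInert_natCast_of_prime {ℓ : ℕ} (hℓ : ℓ.Prime) (hmod : ℓ % 3 = 2) :
    EisensteinInert (ℓ : ℤ) := by
  have : Fact ℓ.Prime := ⟨hℓ⟩
  have h3 : (3 : ZMod ℓ) ≠ 0 := by
    have h : ¬ℓ ∣ 3 := by
      rw [Nat.prime_dvd_prime_iff_eq hℓ Nat.prime_three]
      lia
    exact_mod_cast mt (ZMod.natCast_eq_zero_iff 3 ℓ).1 h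
  have hcube : Function.Injective fun a : ZMod ℓ ↦ a ^ 3 := by
    refine pow_left_injective_of_coprime_card_sub_one three_ne_zero ?_
    rw [Nat.card_zmod, Nat.coprime_comm, Nat.Prime.coprime_iff_not_dvd Nat.prime_three]
    lia
  intro u v h
  simp only [← ZMod.intCast_zmod_eq_zero_iff_dvd] at h ⊢
  rw [← eisensteinNorm_eq_zero_iff h3 hcube]
  simpa [eisensteinNorm] using h

theorem exists_eisensteinNorm_eq_of_sq_add_mul_sq {x y w : ℤ}
    (h : x ^ 2 + 27 * y ^ 2 = 4 * w) : ∃ u, eisensteinNorm u (3 * y) = w := by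
  have hparity : Even (x - 3 * y) := by
    have hsq : Even ((x - 3 * y) ^ 2) :=
      ⟨2 * w - 9 * y ^ 2 - 3 * (x * y), by linear_combination h⟩
    exact (Int.even_pow' two_ne_zero).1 hsq
  obtain ⟨u, hu⟩ := hparity
  refine ⟨u, ?_⟩
  obtain rfl : x = 2 * u + 3 * y := by linear_combination hu
  unfold eisensteinNorm
  apply mul_left_cancel₀ (four_ne_zero (α := ℤ))
  linear_combination h

theorem stmt_1_general {D ℓ : ℕ} (hℓ : ℓ.Prime) (hmod : ℓ % 3 = 2) (hdvd : ℓ ∣ D) :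
    X1Dstar D = ∅ := by
  rw [Set.eq_empty_iff_forall_notMem]
  rintro ⟨x, y, z⟩ ⟨⟨-, heq : x ^ 2 + 27 * y ^ 2 = 4 * z ^ 3, hgcd : Int.gcd y z = D⟩, hstar⟩
  have hprime : Prime (ℓ : ℤ) := Nat.prime_iff_prime_int.1 hℓ
  have hinert : EisensteinInert (ℓ : ℤ) := eisensteinInert_natCast_of_prime hℓ hmod
  have hz : (ℓ : ℤ) ∣ z := (Int.dvd_gcd_iff.1 (hgcd ▸ hdvd)).2
  obtain ⟨u, hu⟩ := exists_eisensteinNorm_eq_of_sq_add_mul_sq heq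
  obtain ⟨hz2, -, h3y⟩ := hinert.pow_dvd_of_eisensteinNorm_eq_cube hprime hu hz
  have hy3 : (ℓ : ℤ) ^ 3 ∣ y :=
    hprime.pow_dvd_of_dvd_mul_left 3 (hinert.not_dvd_three hprime.not_isUnit) h3y
  have hD2 : ℓ ^ 2 ∣ D := by
    rw [← hgcd, Int.dvd_gcd_iff, Nat.cast_pow]
    exact ⟨(pow_dvd_pow _ (by lia)).trans hy3, hz2⟩
  exact hstar ℓ hℓ hD2 hy3

theorem stmt_1 (D : ℕ) (hD : 0 < D) (hcf : Cubefree D)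
    (hℓ : ∃ ℓ : ℕ, ℓ.Prime ∧ ℓ % 3 = 2 ∧ ℓ ∣ D) :
    X1Dstar D = ∅ := by
  obtain ⟨ℓ, hprime, hmod, hdvd⟩ := hℓ
  exact stmt_1_general hprime hmod hdvd
end

section
/- Let D be a cube-free positive integer. If 3 divides D but 9 does not divide D (i.e. 3 exactly divides D), then the set X_1^D(ℤ)* is empty. -/
/-!
Let `p = 3` divide `y = p b` and `z = p c` in `x ^ 2 + p ^ 3 * y ^ 2 = 4 * z ^ 3`. Then `p ^ 3`
divides `x ^ 2`, so `x = p ^ 2 * a`, and the equation becomes `p * (a ^ 2 + p * b ^ 2) = 4 * c ^ 3`.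
Hence `p ∣ c`, so `p ^ 2` divides `a ^ 2 + p * b ^ 2`. This forces `p ∣ a`, then `p ∣ b`: both
`y` and `z` are divisible by `p ^ 2`, so `gcd y z` cannot be divisible by `3` exactly once.
-/

section PrimeElement

theorem pow_succ_dvd_of_pow_mul_add_one_dvd_pow {M : Type*} [CommMonoidWithZero M]
    [IsCancelMulZero M] {p x : M} (hp : Prime p) {n : ℕ} (k : ℕ) (h : p ^ (n * k + 1) ∣ x ^ n) :
    p ^ (k + 1) ∣ x := by
  induction k generalizing x with
  | zero => simpa using hp.dvd_of_dvd_pow (by simpa using h)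
  | succ k ih =>
    obtain ⟨w, rfl⟩ : p ∣ x :=
      hp.dvd_of_dvd_pow ((dvd_pow_self p (n * (k + 1)).succ_ne_zero).trans h)
    have hw : p ^ (n * k + 1) ∣ w ^ n := by
      rwa [mul_pow, show n * (k + 1) + 1 = n + (n * k + 1) by ring, pow_add,
        mul_dvd_mul_iff_left (pow_ne_zero n hp.ne_zero)] at h
    rw [pow_succ']
    exact mul_dvd_mul_left p (ih hw)

variable {R : Type*} [CommRing R] [IsDomain R] {p : R}

theorem dvd_and_dvd_of_sq_dvd_sq_add_mul_sq (hp : Prime p) {a b : R}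
    (h : p ^ 2 ∣ a ^ 2 + p * b ^ 2) : p ∣ a ∧ p ∣ b := by
  have ha : p ∣ a :=
    hp.dvd_of_dvd_pow ((dvd_add_left (dvd_mul_right p _)).mp ((dvd_pow_self p two_ne_zero).trans h))
  have hb : p * p ∣ p * b ^ 2 := sq p ▸ (dvd_add_right (pow_dvd_pow_of_dvd ha 2)).mp h
  exact ⟨ha, hp.dvd_of_dvd_pow ((mul_dvd_mul_iff_left hp.ne_zero).mp hb)⟩

theorem sq_dvd_and_sq_dvd_of_sq_add_cube_mul_sq_eq_mul_cube (hp : Prime p) {u x y z : R}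
    (hu : ¬ p ∣ u) (h : x ^ 2 + p ^ 3 * y ^ 2 = u * z ^ 3) (hy : p ∣ y) (hz : p ∣ z) :
    p ^ 2 ∣ y ∧ p ^ 2 ∣ z := by
  obtain ⟨b, rfl⟩ := hy
  obtain ⟨c, rfl⟩ := hz
  obtain ⟨a, rfl⟩ : p ^ 2 ∣ x := pow_succ_dvd_of_pow_mul_add_one_dvd_pow hp (n := 2) 1
    ⟨u * c ^ 3 - (p * b) ^ 2, by linear_combination h⟩
  have h_reduced : p * (a ^ 2 + p * b ^ 2) = u * c ^ 3 :=
    mul_left_cancel₀ (pow_ne_zero 3 hp.ne_zero) (by linear_combination h)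
  have hc : p ∣ c :=
    hp.dvd_of_dvd_pow ((hp.dvd_or_dvd (Dvd.intro _ h_reduced)).resolve_left hu)
  have h_form : p ^ 2 ∣ a ^ 2 + p * b ^ 2 := by
    rw [← mul_dvd_mul_iff_left hp.ne_zero, h_reduced, ← pow_succ']
    exact (pow_dvd_pow_of_dvd hc 3).mul_left u
  have hb : p ∣ b := (dvd_and_dvd_of_sq_dvd_sq_add_mul_sq hp h_form).2
  rw [sq]
  exact ⟨mul_dvd_mul_left p hb, mul_dvd_mul_left p hc⟩

end PrimeElement

theorem stmt_2_general (D : ℕ) (h3 : 3 ∣ D) (h9 : ¬ 9 ∣ D) : X1D D = ∅ := by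
  rw [Set.eq_empty_iff_forall_notMem]
  rintro ⟨x, y, z⟩ ⟨-, h_eq, rfl⟩
  obtain ⟨hy, hz⟩ := Int.dvd_gcd_iff.mp h3
  exact h9 (Int.dvd_gcd_iff.mpr (sq_dvd_and_sq_dvd_of_sq_add_cube_mul_sq_eq_mul_cube
    Int.prime_three (by norm_num) h_eq hy hz))

theorem stmt_2 (D : ℕ) (hD : 0 < D) (hcf : Cubefree D)
    (h3 : 3 ∣ D) (h9 : ¬ 9 ∣ D) :
    X1Dstar D = ∅ := by
  exact Set.subset_eq_empty (fun _ hq ↦ hq.1) (stmt_2_general D h3 h9)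
end

section
/- Let D be a positive integer with 3 ∤ D. Then the map (x,y,z) ↦ (3x, y, z) defines a bijection from the set S'_D = {(x,y,z) ∈ Y_D^1(ℤ)* : 3 ∤ y} onto X_{9D}^1(ℤ)*. -/
/-!
Every solution of `x² + 27y² = 36Dz³` has `3 ∣ x`; substituting `x = 3w` and dividing by `9` gives
`w² + 3y² = 4Dz³`. Since `ℓ² ∣ 9D` holds for a prime `ℓ` exactly when `ℓ = 3` or `ℓ² ∣ D`, the
starred condition at level `9D` is the one at level `D` together with `3 ∤ y`.
-/

theorem prime_pow_dvd_prime_pow_mul_iff {p q : ℕ} (hp : p.Prime) (hq : q.Prime) (k n : ℕ) :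
    p ^ k ∣ q ^ k * n ↔ p = q ∨ p ^ k ∣ n := by
  constructor
  · intro hdvd
    refine or_iff_not_imp_left.2 fun hne ↦ ?_
    exact (Nat.coprime_pow_primes k k hp hq hne).dvd_of_dvd_mul_left hdvd
  · rintro (rfl | hdvd)
    · exact dvd_mul_right _ _
    · exact hdvd.mul_left _

theorem forall_prime_pow_dvd_prime_pow_mul_iff {P : ℕ → Prop} {q : ℕ} (hq : q.Prime) (k n : ℕ) :
    (∀ p : ℕ, p.Prime → p ^ k ∣ q ^ k * n → P p) ↔
      (∀ p : ℕ, p.Prime → p ^ k ∣ n → P p) ∧ P q := by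
  constructor
  · exact fun h ↦ ⟨fun p hp hdvd ↦ h p hp (hdvd.mul_left _), h q hq (dvd_mul_right _ _)⟩
  · rintro ⟨h, h_self⟩ p hp hdvd
    obtain rfl | hdvd := (prime_pow_dvd_prime_pow_mul_iff hp hq k n).1 hdvd
    · exact h_self
    · exact h p hp hdvd

section Level

variable {D : ℕ} {x y z : ℤ}

theorem three_dvd_fst_of_mem_XD1 (hD : 3 ∣ D) (h : (x, y, z) ∈ XD1 D) : 3 ∣ x := by
  obtain ⟨-, heq, -⟩ := h
  have hrhs : (3 : ℤ) ∣ 4 * D * z ^ 3 :=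
    ((Int.natCast_dvd_natCast.2 hD).mul_left 4).mul_right _
  have hlhs : (3 : ℤ) ∣ 27 * y ^ 2 := Dvd.dvd.mul_right (by norm_num) _
  exact Int.prime_three.dvd_of_dvd_pow ((dvd_add_left hlhs).1 (heq ▸ hrhs))

theorem three_mul_mem_XD1_nine_mul_iff : (3 * x, y, z) ∈ XD1 (9 * D) ↔ (x, y, z) ∈ YD1 D := by
  have hne : 3 * x * y * z ≠ 0 ↔ x * y * z ≠ 0 := by simp
  have heq : (3 * x) ^ 2 + 27 * y ^ 2 = 4 * ((9 * D : ℕ) : ℤ) * z ^ 3 ↔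
      x ^ 2 + 3 * y ^ 2 = 4 * D * z ^ 3 := by
    push_cast
    constructor <;> intro h <;> linarith
  exact and_congr hne (and_congr_left' heq)

theorem three_mul_mem_XD1star_nine_mul_iff :
    (3 * x, y, z) ∈ XD1star (9 * D) ↔ (x, y, z) ∈ YD1star D ∧ ¬ 3 ∣ y := by
  have hstar : (∀ ℓ : ℕ, ℓ.Prime → ℓ ^ 2 ∣ 9 * D → ¬ (ℓ : ℤ) ∣ y) ↔
      (∀ ℓ : ℕ, ℓ.Prime → ℓ ^ 2 ∣ D → ¬ (ℓ : ℤ) ∣ y) ∧ ¬ 3 ∣ y :=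
    forall_prime_pow_dvd_prime_pow_mul_iff Nat.prime_three 2 D
  exact (and_congr three_mul_mem_XD1_nine_mul_iff hstar).trans and_assoc.symm

end Level

theorem stmt_5_general (D : ℕ) :
    Set.BijOn (fun q : ℤ × ℤ × ℤ => (3 * q.1, q.2.1, q.2.2))
      {q ∈ YD1star D | ¬ ((3 : ℤ) ∣ q.2.1)} (XD1star (9 * D)) := by
  refine ⟨?mapsTo, ?injOn, ?surjOn⟩
  case mapsTo => exact fun _ hq ↦ three_mul_mem_XD1star_nine_mul_iff.2 hq
  case injOn =>
    rintro ⟨x, y, z⟩ - ⟨x', y', z'⟩ - h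
    simpa using h
  case surjOn =>
    rintro ⟨x, y, z⟩ hq
    obtain ⟨w, rfl⟩ := three_dvd_fst_of_mem_XD1 (dvd_mul_of_dvd_left (by norm_num) D) hq.1
    exact ⟨(w, y, z), three_mul_mem_XD1star_nine_mul_iff.1 hq, rfl⟩

theorem stmt_5 (D : ℕ) (hD : 0 < D) (h3 : ¬ 3 ∣ D) :
    Set.BijOn (fun q : ℤ × ℤ × ℤ => (3 * q.1, q.2.1, q.2.2))
      {q ∈ YD1star D | ¬ ((3 : ℤ) ∣ q.2.1)} (XD1star (9 * D)) :=
  stmt_5_general D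
end

section
/- The set X_1^9(ℤ)* equals the set of all triples (±27((s+t)³ − 9st²), 9(s³ − 3s²t + t³), 9(s² − st + t²)) where s and t range over coprime integers with 3 ∤ (s+t). -/
/-!
Dividing `(x, y, z)` by `(27, 9, 9)` turns the equation into `x² + 3y² = 4z³` with `y`, `z` coprime
and `3 ∤ y`. In the Eisenstein integers `ℤ[ω]` this says that `α = (x + y) / 2 + yω` has norm `z³`.
Since `3 ∤ z`, the elements `α` and `star α` are coprime, so `α` is a unit times a cube, and since
`-1` is a cube, `α = ω ^ k * (s + tω)³` with `k < 3`. For `k = 0` the `ω`-coordinate `y` would be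
divisible by `3`; the cases `k = 1` and `k = 2` give the two signs of `x`.
-/

open QuadraticAlgebra

section QuadraticAlgebra

variable {R : Type*} [CommRing R] {a b : R} {z : QuadraticAlgebra R a b}

theorem sub_star_sq (z : QuadraticAlgebra R a b) :
    (z - star z) ^ 2 = algebraMap R _ ((b ^ 2 + 4 * a) * z.im ^ 2) := by
  ext <;> simp [pow_two] <;> ring

theorem isCoprime_star_of_isCoprime_norm
    (h : IsCoprime z.norm ((b ^ 2 + 4 * a) * z.im)) : IsCoprime z (star z) := by
  have h_im_sq : IsCoprime z.norm ((b ^ 2 + 4 * a) * z.im ^ 2) :=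
    h.of_mul_right_left.mul_right h.of_mul_right_right.pow_right
  have h_alg := h_im_sq.map (algebraMap R (QuadraticAlgebra R a b))
  rw [algebraMap_norm_eq_mul_star, ← sub_star_sq] at h_alg
  have h_sub : IsCoprime z (z - star z) :=
    (IsCoprime.pow_right_iff two_pos).1 h_alg.of_mul_left_left
  simpa using h_sub.neg_right.add_mul_left_right 1

theorem exists_associated_pow_of_norm_eq_pow [IsDomain (QuadraticAlgebra R a b)]
    [IsBezout (QuadraticAlgebra R a b)] {c : R} {n : ℕ}
    (hz : IsCoprime z (star z)) (h : z.norm = c ^ n) :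
    ∃ d : QuadraticAlgebra R a b, Associated (d ^ n) z := by
  refine exists_associated_pow_of_mul_eq_pow' (c := algebraMap R _ c) hz ?_
  rw [← algebraMap_norm_eq_mul_star, h, map_pow]

end QuadraticAlgebra

theorem two_mul_abs_bmod_le (x : ℤ) {m : ℕ} (hm : 0 < m) : 2 * |x.bmod m| ≤ m := by
  have h_lower := Int.le_bmod (x := x) hm
  have h_upper := Int.bmod_lt (x := x) hm
  grind

/-- The Eisenstein integers `ℤ[ω]`, with `ω ^ 2 = -1 - ω`; the element `⟨s, t⟩` is `s + t * ω`. -/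
abbrev EisensteinInt := QuadraticAlgebra ℤ (-1) (-1)

namespace EisensteinInt

theorem norm_eq (z : EisensteinInt) : z.norm = z.re ^ 2 - z.re * z.im + z.im ^ 2 := by
  rw [norm_def]
  ring

theorem four_mul_norm (z : EisensteinInt) :
    4 * z.norm = (2 * z.re - z.im) ^ 2 + 3 * z.im ^ 2 := by
  rw [norm_eq]
  ring

theorem norm_nonneg (z : EisensteinInt) : 0 ≤ z.norm := by
  linarith [four_mul_norm z, sq_nonneg (2 * z.re - z.im), sq_nonneg z.im]

theorem norm_pos {z : EisensteinInt} (hz : z ≠ 0) : 0 < z.norm := by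
  refine (norm_nonneg z).lt_of_ne' fun h => hz ?_
  have h_im : z.im = 0 := by
    rw [← sq_eq_zero_iff]
    linarith [four_mul_norm z, sq_nonneg (2 * z.re - z.im), sq_nonneg z.im]
  have h_re : z.re = 0 := by
    rw [norm_eq, h_im] at h
    simpa using h
  exact QuadraticAlgebra.ext h_re h_im

theorem norm_lt_sq {z : EisensteinInt} {n : ℤ} (hn : 0 < n) (hre : 2 * |z.re| ≤ n)
    (him : 2 * |z.im| ≤ n) : z.norm < n ^ 2 := by
  have h_abs : z.norm ≤ |z.re| ^ 2 + |z.re| * |z.im| + |z.im| ^ 2 := by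
    rw [norm_eq, sq_abs, sq_abs, ← abs_mul]
    linarith [neg_abs_le (z.re * z.im)]
  have h_four : 4 * z.norm ≤ 3 * n ^ 2 := calc
    4 * z.norm ≤ (2 * |z.re|) ^ 2 + 2 * |z.re| * (2 * |z.im|) + (2 * |z.im|) ^ 2 := by linarith
    _ ≤ n ^ 2 + n * n + n ^ 2 := by gcongr
    _ = 3 * n ^ 2 := by ring
  linarith [pow_pos hn 2]

/-- Division with remainder rounds both coordinates of the exact quotient `x * star y / y.norm`
to a nearest integer. -/
instance : Div EisensteinInt where
  div x y := ⟨(x * star y).re.bdiv y.norm.natAbs, (x * star y).im.bdiv y.norm.natAbs⟩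

instance : Mod EisensteinInt where
  mod x y := x - y * (x / y)

theorem div_def (x y : EisensteinInt) :
    x / y = ⟨(x * star y).re.bdiv y.norm.natAbs, (x * star y).im.bdiv y.norm.natAbs⟩ :=
  rfl

theorem mod_def (x y : EisensteinInt) : x % y = x - y * (x / y) :=
  rfl

theorem mod_mul_star (x y : EisensteinInt) :
    x % y * star y =
      ⟨(x * star y).re.bmod y.norm.natAbs, (x * star y).im.bmod y.norm.natAbs⟩ := by
  have h_natAbs : (y.norm.natAbs : ℤ) = y.norm := Int.natAbs_of_nonneg (norm_nonneg y)
  calc x % y * star y = x * star y - algebraMap ℤ _ y.norm * (x / y) := by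
        rw [algebraMap_norm_eq_mul_star, mod_def]
        ring
    _ = _ := by
        ext <;> simp [div_def, Int.bmod_eq_self_sub_mul_bdiv, h_natAbs]

theorem norm_mod_lt (x : EisensteinInt) {y : EisensteinInt} (hy : y ≠ 0) :
    (x % y).norm < y.norm := by
  have h_pos := norm_pos hy
  have h_bmod (k : ℤ) : 2 * |k.bmod y.norm.natAbs| ≤ y.norm :=
    (two_mul_abs_bmod_le k (by omega)).trans_eq (Int.natAbs_of_nonneg h_pos.le)
  have h_lt : (x % y * star y).norm < y.norm ^ 2 := by
    rw [mod_mul_star]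
    exact norm_lt_sq h_pos (h_bmod _) (h_bmod _)
  rw [map_mul, QuadraticAlgebra.norm_star, sq] at h_lt
  exact lt_of_mul_lt_mul_right h_lt h_pos.le

instance : EuclideanDomain EisensteinInt where
  quotient := (· / ·)
  remainder := (· % ·)
  quotient_zero x := by ext <;> simp [div_def, Int.bdiv]
  quotient_mul_add_remainder_eq x y := by simp [mod_def]
  r := InvImage (· < ·) fun x => x.norm.natAbs
  r_wellFounded := (measure fun x : EisensteinInt => x.norm.natAbs).wf
  remainder_lt x y hy :=
    Int.natAbs_lt_natAbs_of_nonneg_of_lt (norm_nonneg _) (norm_mod_lt x hy)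
  mul_left_not_lt x y hy := by
    have h_one_le : 1 ≤ y.norm.natAbs := Int.natAbs_pos.2 (norm_pos hy).ne'
    simpa [InvImage, Int.natAbs_mul] using Nat.le_mul_of_pos_right _ h_one_le

theorem norm_eq_one_of_isUnit {u : EisensteinInt} (hu : IsUnit u) : u.norm = 1 := by
  have h_nonneg := norm_nonneg u
  rcases Int.isUnit_iff.1 (isUnit_iff_norm_isUnit.1 hu) with h | h <;> omega

theorem exists_eq_omega_pow_or_eq_neg_of_isUnit {u : EisensteinInt} (hu : IsUnit u) :
    ∃ k < 3, u = ω ^ k ∨ u = -ω ^ k := by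
  obtain ⟨s, t⟩ := u
  have h_norm : s ^ 2 - s * t + t ^ 2 = 1 := (norm_eq _).symm.trans (norm_eq_one_of_isUnit hu)
  have h_re : |s| ≤ 1 := by
    rw [← sq_le_one_iff_abs_le_one]
    linarith [sq_nonneg (s - 2 * t)]
  have h_im : |t| ≤ 1 := by
    rw [← sq_le_one_iff_abs_le_one]
    linarith [sq_nonneg (2 * s - t)]
  obtain ⟨h_re_lower, h_re_upper⟩ := abs_le.1 h_re
  obtain ⟨h_im_lower, h_im_upper⟩ := abs_le.1 h_im
  interval_cases s <;> interval_cases t <;> first | omega | decide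

theorem exists_eq_omega_pow_mul_cube {z : EisensteinInt} {c : ℤ}
    (hz : IsCoprime c (3 * z.im)) (h : z.norm = c ^ 3) :
    ∃ k < 3, ∃ d : EisensteinInt, z = ω ^ k * d ^ 3 ∧ c = d.norm := by
  have h_star : IsCoprime z (star z) := by
    apply isCoprime_star_of_isCoprime_norm
    rw [h]
    simpa using hz.pow_left (m := 3).neg_right
  obtain ⟨d, u, hd⟩ := exists_associated_pow_of_norm_eq_pow h_star h
  have h_norm : d.norm = c := by
    apply (Odd.strictMono_pow (R := ℤ) (n := 3) (by decide)).injective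
    simpa [norm_eq_one_of_isUnit u.isUnit, h] using congrArg QuadraticAlgebra.norm hd
  obtain ⟨k, hk, hu | hu⟩ := exists_eq_omega_pow_or_eq_neg_of_isUnit u.isUnit
  · exact ⟨k, hk, d, by rw [← hd, hu, mul_comm], h_norm.symm⟩
  · refine ⟨k, hk, -d, ?_, by rw [QuadraticAlgebra.norm_neg, h_norm]⟩
    rw [← hd, hu]
    ring

theorem mk_pow_three (s t : ℤ) :
    (⟨s, t⟩ : EisensteinInt) ^ 3 = ⟨s ^ 3 - 3 * s * t ^ 2 + t ^ 3, 3 * (s * t * (s - t))⟩ := by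
  ext <;> simp [pow_succ] <;> ring

end EisensteinInt

section CubicForm

variable {R : Type*} [CommRing R] {s t : R}

theorem isCoprime_of_isCoprime_cubic_quadratic
    (h : IsCoprime (s ^ 3 - 3 * s ^ 2 * t + t ^ 3) (s ^ 2 - s * t + t ^ 2)) : IsCoprime s t := by
  obtain ⟨u, v, huv⟩ := h
  refine ⟨u * (s ^ 2 - 3 * s * t) + v * (s - t), u * t ^ 2 + v * t, ?_⟩
  linear_combination huv

theorem isCoprime_cubic_quadratic (hst : IsCoprime s t) (h3 : IsCoprime 3 (s + t)) :
    IsCoprime (s ^ 3 - 3 * s ^ 2 * t + t ^ 3) (s ^ 2 - s * t + t ^ 2) := by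
  have h_three : IsCoprime 3 (s ^ 2 - s * t + t ^ 2) := by
    convert h3.pow_right (n := 2).add_mul_left_right (-(s * t)) using 1
    ring
  have h_left : IsCoprime s (s ^ 2 - s * t + t ^ 2) := by
    convert hst.pow_right (n := 2).add_mul_left_right (s - t) using 1
    ring
  have h_right : IsCoprime t (s ^ 2 - s * t + t ^ 2) := by
    convert hst.symm.pow_right (n := 2).add_mul_left_right (t - s) using 1
    ring
  have h_prod : IsCoprime (3 * s ^ 2 * t) (s ^ 2 - s * t + t ^ 2) :=
    (h_three.mul_left h_left.pow_left).mul_left h_right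
  convert h_prod.neg_left.add_mul_left_left (s + t) using 1
  ring

theorem three_dvd_cubic_iff {s t : ℤ} : 3 ∣ s ^ 3 - 3 * s ^ 2 * t + t ^ 3 ↔ 3 ∣ s + t := by
  rw [← Int.prime_three.dvd_pow_iff_dvd (a := s + t) three_ne_zero]
  exact dvd_iff_dvd_of_dvd_sub ⟨-(2 * s ^ 2 * t + s * t ^ 2), by ring⟩

end CubicForm

section Parametrization

variable {x y z : ℤ}

theorem three_dvd_of_nine_dvd_sq_add_three_mul_sq (h : 9 ∣ x ^ 2 + 3 * y ^ 2) : 3 ∣ y := by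
  obtain ⟨c, hc⟩ := h
  obtain ⟨k, rfl⟩ : 3 ∣ x :=
    Int.prime_three.dvd_of_dvd_pow (n := 2) ⟨3 * c - y ^ 2, by linarith⟩
  exact Int.prime_three.dvd_of_dvd_pow (n := 2) ⟨c - k ^ 2, by linarith⟩

theorem not_three_dvd_of_sq_add_three_mul_sq_eq (h : x ^ 2 + 3 * y ^ 2 = 4 * z ^ 3)
    (hy : ¬ 3 ∣ y) : ¬ 3 ∣ z := by
  rintro ⟨k, rfl⟩
  exact hy (three_dvd_of_nine_dvd_sq_add_three_mul_sq (x := x) ⟨12 * k ^ 3, by rw [h]; ring⟩)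

theorem mul_mul_ne_zero_of_sq_add_three_mul_sq_eq (h : x ^ 2 + 3 * y ^ 2 = 4 * z ^ 3)
    (hy : ¬ 3 ∣ y) : x * y * z ≠ 0 := by
  have hz := not_three_dvd_of_sq_add_three_mul_sq_eq h hy
  have hx : x ≠ 0 := by
    rintro rfl
    have h_dvd : 3 ∣ 4 * z ^ 3 := ⟨y ^ 2, by linarith⟩
    exact hz (Int.prime_three.dvd_of_dvd_pow
      ((Int.prime_three.dvd_or_dvd h_dvd).resolve_left (by norm_num)))
  refine mul_ne_zero (mul_ne_zero hx ?_) ?_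
  · rintro rfl
    exact hy (dvd_zero 3)
  · rintro rfl
    exact hz (dvd_zero 3)

theorem exists_cubic_param (h : x ^ 2 + 3 * y ^ 2 = 4 * z ^ 3) (hyz : IsCoprime y z)
    (hy : ¬ 3 ∣ y) :
    ∃ s t : ℤ, y = s ^ 3 - 3 * s ^ 2 * t + t ^ 3 ∧ z = s ^ 2 - s * t + t ^ 2 ∧
      (x = (s + t) ^ 3 - 9 * s * t ^ 2 ∨ x = -((s + t) ^ 3 - 9 * s * t ^ 2)) := by
  have hz := not_three_dvd_of_sq_add_three_mul_sq_eq h hy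
  obtain ⟨a, ha⟩ : 2 ∣ x + y :=
    Int.prime_two.dvd_of_dvd_pow (n := 2) ⟨2 * z ^ 3 - y ^ 2 + x * y, by linear_combination h⟩
  obtain rfl : x = 2 * a - y := by linarith
  have h_norm : (⟨a, y⟩ : EisensteinInt).norm = z ^ 3 := by
    rw [EisensteinInt.norm_eq]
    linarith
  have h_coprime : IsCoprime z (3 * y) :=
    ((Int.prime_three.coprime_iff_not_dvd).2 hz).symm.mul_right hyz.symm
  obtain ⟨k, hk, ⟨s, t⟩, h_cube, h_z⟩ :=
    EisensteinInt.exists_eq_omega_pow_mul_cube h_coprime h_norm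
  rw [EisensteinInt.norm_eq] at h_z
  rw [EisensteinInt.mk_pow_three] at h_cube
  interval_cases k <;>
    simp only [pow_zero, one_mul, pow_one, pow_two, mul_assoc, omega_mul_mk,
      QuadraticAlgebra.mk.injEq] at h_cube <;>
    obtain ⟨h_re, h_im⟩ := h_cube
  · exact absurd ⟨_, h_im⟩ hy
  · exact ⟨s, t, by linarith, h_z, .inr (by linarith)⟩
  · exact ⟨-t, -s, by linarith, by linarith, .inl (by linarith)⟩

theorem sq_add_three_mul_sq_eq_four_mul_cube_iff :
    (x ^ 2 + 3 * y ^ 2 = 4 * z ^ 3 ∧ IsCoprime y z ∧ ¬ 3 ∣ y) ↔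
      ∃ s t : ℤ, IsCoprime s t ∧ ¬ 3 ∣ s + t ∧
        y = s ^ 3 - 3 * s ^ 2 * t + t ^ 3 ∧ z = s ^ 2 - s * t + t ^ 2 ∧
        (x = (s + t) ^ 3 - 9 * s * t ^ 2 ∨ x = -((s + t) ^ 3 - 9 * s * t ^ 2)) := by
  constructor
  · rintro ⟨h, hyz, hy⟩
    obtain ⟨s, t, rfl, rfl, hx⟩ := exists_cubic_param h hyz hy
    exact ⟨s, t, isCoprime_of_isCoprime_cubic_quadratic hyz, mt three_dvd_cubic_iff.2 hy,
      rfl, rfl, hx⟩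
  · rintro ⟨s, t, hst, h3, rfl, rfl, hx⟩
    refine ⟨?_, isCoprime_cubic_quadratic hst ((Int.prime_three.coprime_iff_not_dvd).2 h3),
      mt three_dvd_cubic_iff.1 h3⟩
    rcases hx with rfl | rfl <;> ring

theorem sq_add_twentySeven_mul_sq_eq_four_mul_cube_iff :
    (x ^ 2 + 27 * y ^ 2 = 4 * z ^ 3 ∧ Int.gcd y z = 9 ∧ ¬ 27 ∣ y) ↔
      ∃ x' y' z' : ℤ, x = 27 * x' ∧ y = 9 * y' ∧ z = 9 * z' ∧
        x' ^ 2 + 3 * y' ^ 2 = 4 * z' ^ 3 ∧ IsCoprime y' z' ∧ ¬ 3 ∣ y' := by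
  have h_dvd (y' : ℤ) : 27 ∣ 9 * y' ↔ 3 ∣ y' := by omega
  have h_gcd (y' z' : ℤ) : Int.gcd (9 * y') (9 * z') = 9 ↔ IsCoprime y' z' := by
    rw [Int.gcd_mul_left, Int.isCoprime_iff_gcd_eq_one]
    simp
  constructor
  · rintro ⟨h, hgcd, h27⟩
    obtain ⟨y', rfl⟩ : 9 ∣ y := by simpa [hgcd] using Int.gcd_dvd_left (a := y) (b := z)
    obtain ⟨z', rfl⟩ : 9 ∣ z := by simpa [hgcd] using Int.gcd_dvd_right (a := 9 * y') (b := z)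
    obtain ⟨x', rfl⟩ : 27 ∣ x :=
      (Int.pow_dvd_pow_iff two_ne_zero).1 ⟨4 * z' ^ 3 - 3 * y' ^ 2, by linarith⟩
    exact ⟨x', y', z', rfl, rfl, rfl, by linarith, (h_gcd y' z').1 hgcd, mt (h_dvd y').2 h27⟩
  · rintro ⟨x', y', z', rfl, rfl, rfl, h, hyz, hy⟩
    exact ⟨by linear_combination 729 * h, (h_gcd y' z').2 hyz, mt (h_dvd y').1 hy⟩

end Parametrization

theorem stmt_6 :
    {q : ℤ × ℤ × ℤ | q.1 * q.2.1 * q.2.2 ≠ 0 ∧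
        q.1 ^ 2 + 27 * q.2.1 ^ 2 = 4 * q.2.2 ^ 3 ∧
        Int.gcd q.2.1 q.2.2 = 9 ∧ ¬ ((27 : ℤ) ∣ q.2.1)} =
    {q : ℤ × ℤ × ℤ | ∃ s t : ℤ, IsCoprime s t ∧ ¬ (3 ∣ (s + t)) ∧
      (q = (27 * ((s + t) ^ 3 - 9 * s * t ^ 2), 9 * (s ^ 3 - 3 * s ^ 2 * t + t ^ 3),
          9 * (s ^ 2 - s * t + t ^ 2)) ∨
       q = (-(27 * ((s + t) ^ 3 - 9 * s * t ^ 2)), 9 * (s ^ 3 - 3 * s ^ 2 * t + t ^ 3),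
          9 * (s ^ 2 - s * t + t ^ 2)))} := by
  ext ⟨x, y, z⟩
  constructor
  · rintro ⟨-, h⟩
    obtain ⟨x', y', z', rfl, rfl, rfl, h_prim⟩ := sq_add_twentySeven_mul_sq_eq_four_mul_cube_iff.1 h
    obtain ⟨s, t, hst, h3, rfl, rfl, rfl | rfl⟩ :=
      sq_add_three_mul_sq_eq_four_mul_cube_iff.1 h_prim
    · exact ⟨s, t, hst, h3, .inl rfl⟩
    · exact ⟨s, t, hst, h3, .inr (by rw [mul_neg])⟩
  · rintro ⟨s, t, hst, h3, h⟩
    obtain ⟨x', h_form, h_eq⟩ : ∃ x', (x' = (s + t) ^ 3 - 9 * s * t ^ 2 ∨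
        x' = -((s + t) ^ 3 - 9 * s * t ^ 2)) ∧ (x, y, z) = (27 * x',
          9 * (s ^ 3 - 3 * s ^ 2 * t + t ^ 3), 9 * (s ^ 2 - s * t + t ^ 2)) :=
      h.elim (fun h => ⟨_, .inl rfl, h⟩) fun h => ⟨_, .inr rfl, by rw [h, mul_neg]⟩
    obtain ⟨rfl, rfl, rfl⟩ : x = _ ∧ y = _ ∧ z = _ := by simpa only [Prod.mk.injEq] using h_eq
    have h_prim := sq_add_three_mul_sq_eq_four_mul_cube_iff.2
      ⟨s, t, hst, h3, rfl, rfl, h_form⟩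
    have h_ne := mul_mul_ne_zero_of_sq_add_three_mul_sq_eq h_prim.1 h_prim.2.2
    exact ⟨by simpa [mul_ne_zero_iff] using h_ne,
      sq_add_twentySeven_mul_sq_eq_four_mul_cube_iff.2 ⟨x', _, _, rfl, rfl, rfl, h_prim⟩⟩
end

section
/- Let D be a positive integer with 3 ∤ D. Then X_D^1(ℤ)* = {(9y, x, 3z) : (x,y,z) ∈ Y_D^1(ℤ)*} ∪ {(x, y/3, z) : (x,y,z) ∈ Y_D^1(ℤ)* and 3 ∣ y}. -/
/-!
Let `p` be a prime not dividing `k D`; the theorem is the case `p = 3`, `k = 4` over `ℤ`. For a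
solution of `x² + p³ y² = k D z³` there are two cases. If `p ∣ z`, then `p³ ∣ x²`, so `p² ∣ x`;
writing `x = p² b` and `z = p c` and dividing the equation by `p³` leaves `y² + p b² = k D c³`.
If `p ∤ z`, then `(x, p y, z)` is a primitive solution of `X² + p Y² = k D Z³`. Conversely, a
primitive solution `(a, b, c)` of the latter has `p ∤ a` and `p ∤ c`: the equation shows that `p`
divides both or neither, and if it divided both it would divide `b` too. A prime other than `p`
dividing the right-hand side divides `a` if and only if it divides `b`, so coprimality and the
starred condition pass from `b` to `a` and back.
-/

section CommRing

variable {R : Type*} [CommRing R]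

theorem dvd_iff_dvd_of_dvd_add {d x y : R} (h : d ∣ x + y) : d ∣ x ↔ d ∣ y :=
  ⟨fun hx ↦ (dvd_add_right hx).1 h, fun hy ↦ (dvd_add_left hy).1 h⟩

theorem isRelPrime_iff_of_dvd_add {x y z : R} (h : z ∣ x + y) :
    IsRelPrime x z ↔ IsRelPrime y z :=
  forall_congr' fun d ↦ by
    have dvd_iff (hdz : d ∣ z) : d ∣ x ↔ d ∣ y := dvd_iff_dvd_of_dvd_add (hdz.trans h)
    constructor <;> intro hd hx hz
    · exact hd ((dvd_iff hz).2 hx) hz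
    · exact hd ((dvd_iff hz).1 hx) hz

theorem dvd_iff_dvd_of_dvd_sq_add_mul_sq {ℓ n x y : R} (hℓ : Prime ℓ) (hn : ¬ ℓ ∣ n)
    (h : ℓ ∣ x ^ 2 + n * y ^ 2) : ℓ ∣ x ↔ ℓ ∣ y :=
  calc ℓ ∣ x ↔ ℓ ∣ x ^ 2 := (hℓ.dvd_pow_iff_dvd two_ne_zero).symm
    _ ↔ ℓ ∣ n * y ^ 2 := dvd_iff_dvd_of_dvd_add h
    _ ↔ ℓ ∣ y ^ 2 := by rw [hℓ.dvd_mul, or_iff_right hn]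
    _ ↔ ℓ ∣ y := hℓ.dvd_pow_iff_dvd two_ne_zero

theorem dvd_iff_dvd_of_sq_add_mul_sq_eq_mul_cube {p m x y z : R} (hp : Prime p) (hm : ¬ p ∣ m)
    (h : x ^ 2 + p * y ^ 2 = m * z ^ 3) : p ∣ x ↔ p ∣ z :=
  calc p ∣ x ↔ p ∣ x ^ 2 := (hp.dvd_pow_iff_dvd two_ne_zero).symm
    _ ↔ p ∣ x ^ 2 + p * y ^ 2 := (dvd_add_left (dvd_mul_right _ _)).symm
    _ ↔ p ∣ m * z ^ 3 := by rw [h]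
    _ ↔ p ∣ z := by rw [hp.dvd_mul, or_iff_right hm, hp.dvd_pow_iff_dvd three_ne_zero]

/-- `AvoidsRepeatedPrimes D y` says that no prime whose square divides `D` divides `y`: the
condition marked by a star in `X_D^1(ℤ)*` and `Y_D^1(ℤ)*`. -/
def AvoidsRepeatedPrimes (D y : R) : Prop :=
  ∀ ℓ, Prime ℓ → ℓ ^ 2 ∣ D → ¬ ℓ ∣ y

theorem AvoidsRepeatedPrimes.congr {D x y : R}
    (h : ∀ ℓ, Prime ℓ → ℓ ∣ D → (ℓ ∣ x ↔ ℓ ∣ y)) :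
    AvoidsRepeatedPrimes D x ↔ AvoidsRepeatedPrimes D y :=
  forall₃_congr fun ℓ hℓ hD ↦ not_congr (h ℓ hℓ ((dvd_pow_self ℓ two_ne_zero).trans hD))

/-- The starred solution set of `x² + n y² = k D z³` in a commutative ring: triples with
`xyz ≠ 0`, with `y` and `z` relatively prime, and with `y` divisible by no prime whose square
divides `D`. The coefficient `k D` is kept split because only `D` enters the last condition. -/
def starredSolutions (k D n : R) : Set (R × R × R) :=
  {q | q.1 * q.2.1 * q.2.2 ≠ 0 ∧ q.1 ^ 2 + n * q.2.1 ^ 2 = k * D * q.2.2 ^ 3 ∧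
    IsRelPrime q.2.1 q.2.2 ∧ AvoidsRepeatedPrimes D q.2.1}

end CommRing

section IsDomain

variable {R : Type*} [CommRing R] [IsDomain R] {p : R}

theorem sq_dvd_of_cube_dvd_sq {x : R} (hp : Prime p) (h : p ^ 3 ∣ x ^ 2) : p ^ 2 ∣ x := by
  obtain ⟨y, rfl⟩ : p ∣ x := hp.dvd_of_dvd_pow ((dvd_pow_self p three_ne_zero).trans h)
  have hy : p ∣ y ^ 2 := by
    rwa [mul_pow, pow_succ, mul_dvd_mul_iff_left (pow_ne_zero 2 hp.ne_zero)] at h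
  rw [pow_two]
  exact mul_dvd_mul_left p (hp.dvd_of_dvd_pow hy)

theorem dvd_of_sq_add_mul_sq_eq_mul_cube {m x y z : R} (hp : Prime p)
    (h : x ^ 2 + p * y ^ 2 = m * z ^ 3) (hx : p ∣ x) (hz : p ∣ z) : p ∣ y := by
  obtain ⟨s, rfl⟩ := hx
  obtain ⟨t, rfl⟩ := hz
  refine hp.dvd_of_dvd_pow (n := 2) ⟨m * p * t ^ 3 - s ^ 2, mul_left_cancel₀ hp.ne_zero ?_⟩
  linear_combination h

theorem not_dvd_of_sq_add_mul_sq_eq_mul_cube {m x y z : R} (hp : Prime p) (hm : ¬ p ∣ m)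
    (h : x ^ 2 + p * y ^ 2 = m * z ^ 3) (hyz : IsRelPrime y z) : ¬ p ∣ z := fun hz ↦
  have hx : p ∣ x := (dvd_iff_dvd_of_sq_add_mul_sq_eq_mul_cube hp hm h).2 hz
  hp.not_isUnit (hyz (dvd_of_sq_add_mul_sq_eq_mul_cube hp h hx hz) hz)

theorem not_dvd_prime_of_dvd_of_not_dvd {D ℓ : R} (hp : Prime p) (hD : ¬ p ∣ D) (hℓ : Prime ℓ)
    (hℓD : ℓ ∣ D) : ¬ ℓ ∣ p := fun h ↦
  hD (((hℓ.dvd_prime_iff_associated hp).1 h).symm.dvd.trans hℓD)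

theorem avoidsRepeatedPrimes_prime_mul_iff {D y : R} (hp : Prime p) (hD : ¬ p ∣ D) :
    AvoidsRepeatedPrimes D (p * y) ↔ AvoidsRepeatedPrimes D y :=
  AvoidsRepeatedPrimes.congr fun _ hℓ hℓD ↦ by
    rw [hℓ.dvd_mul, or_iff_right (not_dvd_prime_of_dvd_of_not_dvd hp hD hℓ hℓD)]

theorem avoidsRepeatedPrimes_iff_of_sq_add_mul_sq {D x y : R} (hp : Prime p) (hD : ¬ p ∣ D)
    (h : D ∣ x ^ 2 + p * y ^ 2) : AvoidsRepeatedPrimes D x ↔ AvoidsRepeatedPrimes D y :=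
  AvoidsRepeatedPrimes.congr fun _ hℓ hℓD ↦ dvd_iff_dvd_of_dvd_sq_add_mul_sq hℓ
    (not_dvd_prime_of_dvd_of_not_dvd hp hD hℓ hℓD) (hℓD.trans h)

variable [DecompositionMonoid R]

theorem isRelPrime_mul_iff_of_sq_add_mul_sq_eq_mul_cube {m x y z : R} (hp : Prime p)
    (hm : ¬ p ∣ m) (h : x ^ 2 + p * y ^ 2 = m * z ^ 3) :
    IsRelPrime x (p * z) ↔ IsRelPrime y z := by
  have hz : z ∣ x ^ 2 + p * y ^ 2 := h ▸ (dvd_pow_self z three_ne_zero).mul_left m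
  have hxz : IsRelPrime x z ↔ IsRelPrime p z ∧ IsRelPrime y z := by
    rw [← IsRelPrime.pow_left_iff two_pos, isRelPrime_iff_of_dvd_add hz, IsRelPrime.mul_left_iff,
      IsRelPrime.pow_left_iff two_pos]
  rw [IsRelPrime.mul_right_iff, hxz, isRelPrime_comm (x := x),
    hp.irreducible.isRelPrime_iff_not_dvd, hp.irreducible.isRelPrime_iff_not_dvd,
    dvd_iff_dvd_of_sq_add_mul_sq_eq_mul_cube hp hm h]
  have hpz : IsRelPrime y z → ¬ p ∣ z := not_dvd_of_sq_add_mul_sq_eq_mul_cube hp hm h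
  tauto

theorem swap_mem_starredSolutions_cube_iff {k D x y z : R} (hp : Prime p) (hkD : ¬ p ∣ k * D) :
    (p ^ 2 * y, x, p * z) ∈ starredSolutions k D (p ^ 3) ↔ (x, y, z) ∈ starredSolutions k D p := by
  have hD : ¬ p ∣ D := mt (Dvd.dvd.mul_left · k) hkD
  have ne_zero_iff : p ^ 2 * y * x * (p * z) ≠ 0 ↔ x * y * z ≠ 0 := by
    rw [show p ^ 2 * y * x * (p * z) = p ^ 3 * (x * y * z) by ring,
      mul_ne_zero_iff_left (pow_ne_zero 3 hp.ne_zero)]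
  have equation_iff : (p ^ 2 * y) ^ 2 + p ^ 3 * x ^ 2 = k * D * (p * z) ^ 3 ↔
      x ^ 2 + p * y ^ 2 = k * D * z ^ 3 := by
    rw [show (p ^ 2 * y) ^ 2 + p ^ 3 * x ^ 2 = p ^ 3 * (x ^ 2 + p * y ^ 2) by ring,
      show k * D * (p * z) ^ 3 = p ^ 3 * (k * D * z ^ 3) by ring,
      mul_right_inj' (pow_ne_zero 3 hp.ne_zero)]
  refine and_congr ne_zero_iff <| (and_congr_left' equation_iff).trans <|
    and_congr_right fun h ↦ and_congr ?_ ?_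
  · exact isRelPrime_mul_iff_of_sq_add_mul_sq_eq_mul_cube hp hkD h
  · exact avoidsRepeatedPrimes_iff_of_sq_add_mul_sq hp hD ⟨k * z ^ 3, by linear_combination h⟩

theorem scale_mem_starredSolutions_iff {k D x y z : R} (hp : Prime p) (hD : ¬ p ∣ D) :
    (x, p * y, z) ∈ starredSolutions k D p ↔
      (x, y, z) ∈ starredSolutions k D (p ^ 3) ∧ ¬ p ∣ z := by
  have ne_zero_iff : x * (p * y) * z ≠ 0 ↔ x * y * z ≠ 0 := by
    rw [show x * (p * y) * z = p * (x * y * z) by ring, mul_ne_zero_iff_left hp.ne_zero]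
  have equation_eq : x ^ 2 + p * (p * y) ^ 2 = x ^ 2 + p ^ 3 * y ^ 2 := by ring
  simp only [starredSolutions, Set.mem_ofPred_eq, ne_zero_iff, equation_eq, IsRelPrime.mul_left_iff,
    hp.irreducible.isRelPrime_iff_not_dvd, avoidsRepeatedPrimes_prime_mul_iff hp hD]
  tauto

theorem stmt_7_general {k D : R} (hp : Prime p) (hkD : ¬ p ∣ k * D) :
    starredSolutions k D (p ^ 3) =
      (fun q : R × R × R => (p ^ 2 * q.2.1, q.1, p * q.2.2)) '' starredSolutions k D p ∪
      (fun q : R × R × R => (q.1, p * q.2.1, q.2.2)) ⁻¹' starredSolutions k D p := by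
  have hD : ¬ p ∣ D := mt (Dvd.dvd.mul_left · k) hkD
  ext ⟨x, y, z⟩
  constructor
  · intro h
    by_cases hz : p ∣ z
    · obtain ⟨c, rfl⟩ := hz
      obtain ⟨b, rfl⟩ : p ^ 2 ∣ x := sq_dvd_of_cube_dvd_sq hp
        ⟨k * D * c ^ 3 - y ^ 2, by linear_combination h.2.1⟩
      exact .inl ⟨(y, b, c), (swap_mem_starredSolutions_cube_iff hp hkD).1 h, rfl⟩
    · exact .inr ((scale_mem_starredSolutions_iff hp hD).2 ⟨h, hz⟩)
  · rintro (⟨⟨a, b, c⟩, h, ⟨⟩⟩ | h)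
    · exact (swap_mem_starredSolutions_cube_iff hp hkD).2 h
    · exact ((scale_mem_starredSolutions_iff hp hD).1 h).1

end IsDomain

section Int

theorem avoidsRepeatedPrimes_natCast_iff {D : ℕ} {y : ℤ} :
    AvoidsRepeatedPrimes (D : ℤ) y ↔ ∀ ℓ : ℕ, ℓ.Prime → ℓ ^ 2 ∣ D → ¬ (ℓ : ℤ) ∣ y := by
  constructor
  · intro h ℓ hℓ hD
    exact h ℓ (Nat.prime_iff_prime_int.1 hℓ) (mod_cast hD)
  · intro h ℓ hℓ hD hy
    refine h ℓ.natAbs (Int.prime_iff_natAbs_prime.1 hℓ) ?_ (Int.natAbs_dvd.2 hy)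
    rwa [← Int.natAbs_pow, ← Int.dvd_natCast]

theorem XD1star_eq_starredSolutions (D : ℕ) : XD1star D = starredSolutions 4 (D : ℤ) 27 := by
  ext
  simp only [XD1star, XD1, starredSolutions, Set.mem_ofPred_eq, and_assoc,
    avoidsRepeatedPrimes_natCast_iff, isRelPrime_iff_isCoprime, Int.isCoprime_iff_gcd_eq_one]

theorem YD1star_eq_starredSolutions (D : ℕ) : YD1star D = starredSolutions 4 (D : ℤ) 3 := by
  ext
  simp only [YD1star, YD1, starredSolutions, Set.mem_ofPred_eq, and_assoc,
    avoidsRepeatedPrimes_natCast_iff, isRelPrime_iff_isCoprime, Int.isCoprime_iff_gcd_eq_one]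

theorem setOf_exists_ediv_eq_preimage_mul {α β : Type*} {n : ℤ} (hn : n ≠ 0)
    (s : Set (α × ℤ × β)) :
    {q : α × ℤ × β | ∃ r ∈ s, n ∣ r.2.1 ∧ q = (r.1, r.2.1 / n, r.2.2)} =
      (fun q => (q.1, n * q.2.1, q.2.2)) ⁻¹' s := by
  ext ⟨x, y, z⟩
  constructor
  · rintro ⟨⟨a, _, c⟩, hr, ⟨b, rfl⟩, ⟨⟩⟩
    simpa only [Set.mem_preimage, Int.mul_ediv_cancel_left b hn] using hr
  · exact fun h ↦ ⟨(x, n * y, z), h, dvd_mul_right n y, by rw [Int.mul_ediv_cancel_left y hn]⟩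

end Int

theorem stmt_7 (D : ℕ) (hD : 0 < D) (h3 : ¬ 3 ∣ D) :
    XD1star D =
      (fun q : ℤ × ℤ × ℤ => (9 * q.2.1, q.1, 3 * q.2.2)) '' (YD1star D) ∪
      {q : ℤ × ℤ × ℤ | ∃ r ∈ YD1star D, (3 : ℤ) ∣ r.2.1 ∧ q = (r.1, r.2.1 / 3, r.2.2)} := by
  rw [XD1star_eq_starredSolutions, YD1star_eq_starredSolutions,
    setOf_exists_ediv_eq_preimage_mul three_ne_zero]
  exact stmt_7_general Int.prime_three (by omega)
end

section
/- Let D be a cube-free positive integer with 3 ∤ D. If some prime ℓ with ℓ ≡ 2 (mod 3) divides D, then the set Y_D^1(ℤ)* is empty. -/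
/-!
Since `x² + 3y² = 4Dz³` forces `x ≡ y (mod 2)`, writing `x = y + 2a` turns the equation into
`Dz³ = a² + ay + y²`, the norm form of the Eisenstein integers. A prime `p ≡ 2 (mod 3)` is inert
there: if `p ∣ D`, then `a³ - y³ = (a - y)(a² + ay + y²)` vanishes modulo `p`, where cubing is
injective, so `a ≡ y`, then `3a² ≡ 0`, and `p` divides both `a` and `y`. Hence `p² ∣ Dz³`, and
`p ∤ z` gives `p² ∣ D` together with `p ∣ y`, which the star condition excludes. Unlike
`x² + 3y²`, this form needs no separate treatment of `p = 2`.
-/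

theorem pow_injective_of_coprime_card_units {G₀ : Type*} [GroupWithZero G₀] {n : ℕ}
    (hn : n ≠ 0) (hcop : (Nat.card G₀ˣ).Coprime n) :
    Function.Injective (fun a : G₀ ↦ a ^ n) := by
  intro a b (hab : a ^ n = b ^ n)
  rcases eq_or_ne b 0 with rfl | hb
  · exact eq_zero_of_pow_eq_zero (hab.trans (zero_pow hn))
  · have ha : a ≠ 0 := ne_zero_pow hn (hab ▸ pow_ne_zero n hb)
    have hunits : Units.mk0 a ha ^ n = Units.mk0 b hb ^ n := Units.ext (by simpa using hab)
    simpa using hcop.pow_left_bijective.injective hunits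

theorem eq_zero_and_eq_zero_of_sq_add_mul_add_sq_eq_zero {R : Type*} [CommRing R]
    [NoZeroDivisors R] (hcube : Function.Injective (fun a : R ↦ a ^ 3)) (h3 : (3 : R) ≠ 0)
    {a b : R} (h : a ^ 2 + a * b + b ^ 2 = 0) : a = 0 ∧ b = 0 := by
  obtain rfl : a = b := hcube (by linear_combination (a - b) * h)
  have ha : 3 * a ^ 2 = 0 := by linear_combination h
  have ha0 : a = 0 := eq_zero_of_pow_eq_zero ((mul_eq_zero.mp ha).resolve_left h3)
  exact ⟨ha0, ha0⟩

theorem dvd_and_dvd_of_dvd_sq_add_mul_add_sq {p : ℕ} (hp : p.Prime) (hp3 : p % 3 = 2) {a b : ℤ}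
    (h : (p : ℤ) ∣ a ^ 2 + a * b + b ^ 2) : (p : ℤ) ∣ a ∧ (p : ℤ) ∣ b := by
  have : Fact p.Prime := ⟨hp⟩
  have hcop : (Nat.card (ZMod p)ˣ).Coprime 3 := by
    rw [Nat.card_eq_fintype_card, ZMod.card_units, Nat.coprime_comm,
      Nat.prime_three.coprime_iff_not_dvd]
    omega
  have h3 : ((3 : ℕ) : ZMod p) ≠ 0 := by
    rw [Ne, ZMod.natCast_eq_zero_iff, Nat.prime_dvd_prime_iff_eq hp Nat.prime_three]
    omega
  simp only [← ZMod.intCast_zmod_eq_zero_iff_dvd, Int.cast_add, Int.cast_mul,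
    Int.cast_pow] at h ⊢
  exact eq_zero_and_eq_zero_of_sq_add_mul_add_sq_eq_zero
    (pow_injective_of_coprime_card_units three_ne_zero hcop) (mod_cast h3) h

theorem exists_eq_sq_add_mul_add_sq_of_sq_add_three_mul_sq_eq_four_mul {x y n : ℤ}
    (h : x ^ 2 + 3 * y ^ 2 = 4 * n) : ∃ a : ℤ, n = a ^ 2 + a * y + y ^ 2 := by
  have hsq : Even ((x - y) ^ 2) := by
    rw [even_iff_two_dvd]
    exact ⟨2 * n - y ^ 2 - x * y, by linear_combination h⟩
  obtain ⟨a, ha⟩ := (Int.even_pow' two_ne_zero).mp hsq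
  obtain rfl : x = y + 2 * a := by linear_combination ha
  exact ⟨a, by linarith⟩

theorem dvd_and_sq_dvd_of_mem_YD1 {D p : ℕ} (hp : p.Prime) (hp3 : p % 3 = 2) (hpD : p ∣ D)
    {q : ℤ × ℤ × ℤ} (hq : q ∈ YD1 D) : (p : ℤ) ∣ q.2.1 ∧ p ^ 2 ∣ D := by
  obtain ⟨x, y, z⟩ := q
  obtain ⟨-, heq, hgcd⟩ := hq
  dsimp only at heq hgcd ⊢
  obtain ⟨a, hnorm⟩ : ∃ a : ℤ, D * z ^ 3 = a ^ 2 + a * y + y ^ 2 :=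
    exists_eq_sq_add_mul_add_sq_of_sq_add_three_mul_sq_eq_four_mul (by rw [heq, mul_assoc])
  have hpnorm : (p : ℤ) ∣ a ^ 2 + a * y + y ^ 2 :=
    hnorm ▸ (Int.natCast_dvd_natCast.mpr hpD).mul_right _
  obtain ⟨hpa, hpy⟩ := dvd_and_dvd_of_dvd_sq_add_mul_add_sq hp hp3 hpnorm
  have hsq : (p : ℤ) ^ 2 ∣ D * z ^ 3 := by
    obtain ⟨c, rfl⟩ := hpa
    obtain ⟨d, rfl⟩ := hpy
    exact ⟨c ^ 2 + c * d + d ^ 2, by rw [hnorm]; ring⟩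
  have hcop : IsCoprime ((p : ℤ) ^ 2) (z ^ 3) :=
    ((Int.isCoprime_iff_gcd_eq_one.mpr hgcd).of_isCoprime_of_dvd_left hpy).pow
  exact ⟨hpy, mod_cast hcop.dvd_of_dvd_mul_right hsq⟩

theorem stmt_9_general (D : ℕ) (hℓ : ∃ ℓ : ℕ, ℓ.Prime ∧ ℓ % 3 = 2 ∧ ℓ ∣ D) :
    YD1star D = ∅ := by
  obtain ⟨p, hp, hp3, hpD⟩ := hℓ
  refine Set.eq_empty_of_forall_notMem fun q ⟨hq, hstar⟩ ↦ ?_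
  obtain ⟨hpy, hpsq⟩ := dvd_and_sq_dvd_of_mem_YD1 hp hp3 hpD hq
  exact hstar p hp hpsq hpy

theorem stmt_9 (D : ℕ) (hD : 0 < D) (hcf : Cubefree D) (h3 : ¬ 3 ∣ D)
    (hℓ : ∃ ℓ : ℕ, ℓ.Prime ∧ ℓ % 3 = 2 ∧ ℓ ∣ D) :
    YD1star D = ∅ :=
  stmt_9_general D hℓ
end

section
/- Let D be an admissible integer, p a prime with p ≡ 1 (mod 3), written p = u² + 3v² with u,v > 0 and gcd(u,3v) = 1, and let (x₀,y₀,z₀) ∈ Y_D^1(ℤ)*. If p ∤ D and p ∤ z₀, then both [p]⁺(x₀,y₀,z₀) = (ux₀ + 3vy₀, uy₀ − vx₀, z₀) and [p]⁻(x₀,y₀,z₀) = (ux₀ − 3vy₀, uy₀ + vx₀, z₀) belong to Y_{pD}^1(ℤ)*. If p ∤ D and p ∣ z₀, then exactly one of [p]⁺(x₀,y₀,z₀), [p]⁻(x₀,y₀,z₀) belongs to Y_{pD}^1(ℤ)*. If p ∣ D and p² ∤ D, then exactly one of [p]⁺(x₀,y₀,z₀), [p]⁻(x₀,y₀,z₀)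 belongs to Y_{pD}^1(ℤ)*. -/
/-!
Write `α = x + y√-3` and `π = u + v√-3`, so that `π` has norm `p`. The maps `[p]⁺` and `[p]⁻`
multiply `α` by the conjugate of `π` and by `π`, hence multiply the norm `x² + 3y² = 4Dz³` by `p`,
and the two new second coordinates satisfy `(uy - vx)(uy + vx) = p y² - v² (x² + 3y²)`.

For a prime `ℓ ≠ p` this identity shows that a common divisor `ℓ` of a new second coordinate and
the norm already divides `y`, so the conditions of `Y_{pD}^1(ℤ)*` survive away from `p`. At `p` it
shows that `p` divides one of the two new second coordinates exactly when `p ∣ Dz`, and then a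
second coordinate divisible by `p` violates one of the conditions at `p`. So an image is in
`Y_{pD}^1(ℤ)*` if and only if `p` does not divide its second coordinate.

Finally `p` cannot divide both: it would divide `y`, hence not `z`, so it would divide `D` and `x`,
and then `p² ∣ 4Dz³` would give `p² ∣ D`, which is excluded when `p ∣ y`.
-/

section NormForm

variable {R : Type*} [CommRing R] {n p ℓ u v x y : R}

lemma sub_mul_add_eq_norm_mul_sq_sub (n u v x y : R) :
    (u * y - v * x) * (u * y + v * x) =
      (u ^ 2 + n * v ^ 2) * y ^ 2 - v ^ 2 * (x ^ 2 + n * y ^ 2) := by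
  ring

lemma dvd_of_dvd_sub_of_dvd_norm (hℓ : Prime ℓ) (huv : ¬ ℓ ∣ u ^ 2 + n * v ^ 2)
    (hsub : ℓ ∣ u * y - v * x) (hnorm : ℓ ∣ x ^ 2 + n * y ^ 2) : ℓ ∣ y := by
  have hdvd : ℓ ∣ (u ^ 2 + n * v ^ 2) * y ^ 2 := by
    rw [eq_add_of_sub_eq (sub_mul_add_eq_norm_mul_sq_sub n u v x y).symm]
    exact dvd_add (hsub.mul_right _) (hnorm.mul_left _)
  exact hℓ.dvd_of_dvd_pow ((hℓ.dvd_or_dvd hdvd).resolve_left huv)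

variable [IsDomain R]

lemma not_dvd_right_of_prime_eq_norm (hp : Prime p) (h : p = u ^ 2 + n * v ^ 2) : ¬ p ∣ v := by
  intro hv
  have hu : p ∣ u := by
    refine hp.dvd_of_dvd_pow (n := 2) ?_
    rw [← sub_eq_iff_eq_add.mpr h]
    exact dvd_sub_self_left.mpr ((dvd_pow hv two_ne_zero).mul_left n)
  have hsq : p ^ 2 ∣ u ^ 2 + n * v ^ 2 :=
    dvd_add (pow_dvd_pow_of_dvd hu 2) ((pow_dvd_pow_of_dvd hv 2).mul_left n)
  rw [← h, pow_two] at hsq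
  exact hp.not_isUnit (hp.irreducible.squarefree p hsq)

lemma not_dvd_left_of_prime_eq_norm (hp : Prime p) (hn : ¬ p ∣ n) (h : p = u ^ 2 + n * v ^ 2) :
    ¬ p ∣ u := by
  intro hu
  have hnv : p ∣ n * v ^ 2 := by
    rw [← sub_eq_iff_eq_add'.mpr h]
    exact dvd_sub_self_left.mpr (dvd_pow hu two_ne_zero)
  exact not_dvd_right_of_prime_eq_norm hp h
    (hp.dvd_of_dvd_pow ((hp.dvd_or_dvd hnv).resolve_left hn))

lemma dvd_sub_or_dvd_add_iff_dvd_norm (hp : Prime p) (h : p = u ^ 2 + n * v ^ 2) :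
    p ∣ u * y - v * x ∨ p ∣ u * y + v * x ↔ p ∣ x ^ 2 + n * y ^ 2 := by
  have hv : ¬ p ∣ v ^ 2 := mt hp.dvd_of_dvd_pow (not_dvd_right_of_prime_eq_norm hp h)
  rw [← hp.dvd_mul, sub_mul_add_eq_norm_mul_sq_sub n, ← h, dvd_sub_right (dvd_mul_right _ _),
    hp.dvd_mul, or_iff_right hv]

end NormForm

lemma sq_add_three_mul_sq_ne_two (u v : ℤ) : u ^ 2 + 3 * v ^ 2 ≠ 2 := by
  intro h
  have hmod : (u : ZMod 4) ^ 2 + 3 * (v : ZMod 4) ^ 2 = 2 := by exact_mod_cast congrArg _ h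
  generalize (u : ZMod 4) = a at hmod
  generalize (v : ZMod 4) = b at hmod
  revert a b
  decide

lemma int_gcd_eq_one_iff_forall_prime_not_dvd {a b : ℤ} :
    Int.gcd a b = 1 ↔ ∀ ℓ : ℕ, ℓ.Prime → (ℓ : ℤ) ∣ a → ¬ (ℓ : ℤ) ∣ b := by
  simp only [Int.natCast_dvd]
  exact ⟨fun h ℓ hℓ ha hb => Nat.not_coprime_of_dvd_of_dvd hℓ.one_lt ha hb h, Nat.coprime_of_dvd⟩

section Raising

variable {D p : ℕ} {u v x y z : ℤ}

lemma mem_YD1star_iff :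
    (x, y, z) ∈ YD1star D ↔ (x ≠ 0 ∧ y ≠ 0 ∧ z ≠ 0) ∧ x ^ 2 + 3 * y ^ 2 = 4 * D * z ^ 3 ∧
      ∀ ℓ : ℕ, ℓ.Prime → (ℓ : ℤ) ∣ y → ¬ (ℓ : ℤ) ∣ z ∧ ¬ ℓ ^ 2 ∣ D := by
  simp only [YD1star, YD1, Set.mem_ofPred_eq, int_gcd_eq_one_iff_forall_prime_not_dvd,
    mul_ne_zero_iff]
  constructor
  · rintro ⟨⟨⟨⟨hx, hy⟩, hz⟩, heq, hcop⟩, hstar⟩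
    exact ⟨⟨hx, hy, hz⟩, heq, fun ℓ hℓ hℓy => ⟨hcop ℓ hℓ hℓy, fun hD => hstar ℓ hℓ hD hℓy⟩⟩
  · rintro ⟨⟨hx, hy, hz⟩, heq, hprime⟩
    exact ⟨⟨⟨⟨hx, hy⟩, hz⟩, heq, fun ℓ hℓ hℓy => (hprime ℓ hℓ hℓy).1⟩,
      fun ℓ hℓ hD hℓy => (hprime ℓ hℓ hℓy).2 hD⟩

lemma dvd_four_mul_mul_cube_iff (hp : p.Prime) (hp2 : p ≠ 2) :
    (p : ℤ) ∣ 4 * D * z ^ 3 ↔ p ∣ D ∨ (p : ℤ) ∣ z := by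
  have hp' : Prime (p : ℤ) := Nat.prime_iff_prime_int.mp hp
  have h4 : ¬ (p : ℤ) ∣ 4 := fun h =>
    hp2 ((Nat.prime_dvd_prime_iff_eq hp Nat.prime_two).mp
      (hp.dvd_of_dvd_pow (n := 2) (by exact_mod_cast h)))
  rw [hp'.dvd_mul, hp'.dvd_mul, hp'.dvd_pow_iff_dvd three_ne_zero, or_iff_right h4,
    Int.natCast_dvd_natCast]

lemma not_dvd_snd_of_mem_YD1star (hp : p.Prime) (hp2 : p ≠ 2) (h : (x, y, z) ∈ YD1star D)
    (hpDz : p ∣ D ∨ (p : ℤ) ∣ z) : ¬ (p : ℤ) ∣ y := by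
  intro hy
  have hp' : Prime (p : ℤ) := Nat.prime_iff_prime_int.mp hp
  obtain ⟨-, heq, hcop⟩ := mem_YD1star_iff.mp h
  obtain ⟨hz, hD⟩ := hcop p hp hy
  obtain ⟨d, rfl⟩ := hpDz.resolve_right hz
  have hx : (p : ℤ) ∣ x := by
    refine hp'.dvd_of_dvd_pow (n := 2) ?_
    rw [eq_sub_of_add_eq heq]
    exact dvd_sub ((dvd_four_mul_mul_cube_iff hp hp2).mpr hpDz)
      ((dvd_pow hy two_ne_zero).mul_left 3)
  have hsq : (p : ℤ) * p ∣ p * (4 * d * z ^ 3) := by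
    have hnorm : (p : ℤ) ^ 2 ∣ x ^ 2 + 3 * y ^ 2 :=
      dvd_add (pow_dvd_pow_of_dvd hx 2) ((pow_dvd_pow_of_dvd hy 2).mul_left 3)
    rw [heq] at hnorm
    convert hnorm using 1 <;> push_cast <;> ring
  have hd : p ∣ d := ((dvd_four_mul_mul_cube_iff hp hp2).mp
    (Int.dvd_of_mul_dvd_mul_left hp'.ne_zero hsq)).resolve_right hz
  exact hD (by rw [pow_two]; exact mul_dvd_mul_left p hd)

lemma pRaiseMinus_eq_pRaisePlus_neg (u v : ℤ) (q : ℤ × ℤ × ℤ) :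
    pRaiseMinus u v q = pRaisePlus u (-v) q := by
  simp only [pRaiseMinus, pRaisePlus, mul_neg, neg_mul, sub_neg_eq_add, ← sub_eq_add_neg]

lemma ne_two_of_eq_sq_add_three_mul_sq (hpuv : (p : ℤ) = u ^ 2 + 3 * v ^ 2) : p ≠ 2 := by
  rintro rfl
  exact sq_add_three_mul_sq_ne_two u v hpuv.symm

lemma dvd_sub_or_dvd_add_iff_of_mem_YD1star (hp : p.Prime)
    (hpuv : (p : ℤ) = u ^ 2 + 3 * v ^ 2) (h : (x, y, z) ∈ YD1star D) :
    (p : ℤ) ∣ u * y - v * x ∨ (p : ℤ) ∣ u * y + v * x ↔ p ∣ D ∨ (p : ℤ) ∣ z := by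
  rw [dvd_sub_or_dvd_add_iff_dvd_norm (Nat.prime_iff_prime_int.mp hp) hpuv,
    (mem_YD1star_iff.mp h).2.1,
    dvd_four_mul_mul_cube_iff hp (ne_two_of_eq_sq_add_three_mul_sq hpuv)]

lemma natCast_not_dvd_left_of_eq_sq_add_three_mul_sq (hp : p.Prime) (hp3 : p ≠ 3)
    (hpuv : (p : ℤ) = u ^ 2 + 3 * v ^ 2) : ¬ (p : ℤ) ∣ u := by
  refine not_dvd_left_of_prime_eq_norm (Nat.prime_iff_prime_int.mp hp) (fun h3 => hp3 ?_) hpuv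
  exact (Nat.prime_dvd_prime_iff_eq hp Nat.prime_three).mp (by exact_mod_cast h3)

lemma not_dvd_sub_and_dvd_add_of_mem_YD1star (hp : p.Prime) (hp3 : p ≠ 3)
    (hpuv : (p : ℤ) = u ^ 2 + 3 * v ^ 2) (h : (x, y, z) ∈ YD1star D) :
    ¬ ((p : ℤ) ∣ u * y - v * x ∧ (p : ℤ) ∣ u * y + v * x) := by
  rintro ⟨hsub, hadd⟩
  have hp' : Prime (p : ℤ) := Nat.prime_iff_prime_int.mp hp
  have hp2 : p ≠ 2 := ne_two_of_eq_sq_add_three_mul_sq hpuv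
  have hdvd : (p : ℤ) ∣ 2 * (u * y) := by
    convert! dvd_add hsub hadd using 1
    ring
  have h2 : ¬ (p : ℤ) ∣ 2 := fun h2 =>
    hp2 ((Nat.prime_dvd_prime_iff_eq hp Nat.prime_two).mp (by exact_mod_cast h2))
  have hy : (p : ℤ) ∣ y :=
    (hp'.dvd_or_dvd ((hp'.dvd_or_dvd hdvd).resolve_left h2)).resolve_left
      (natCast_not_dvd_left_of_eq_sq_add_three_mul_sq hp hp3 hpuv)
  exact not_dvd_snd_of_mem_YD1star hp hp2 h
    ((dvd_sub_or_dvd_add_iff_of_mem_YD1star hp hpuv h).mp (Or.inl hsub)) hy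

lemma pRaisePlus_mem_YD1star_of_not_dvd (hp : p.Prime) (hp3 : p ≠ 3)
    (hpuv : (p : ℤ) = u ^ 2 + 3 * v ^ 2) (h : (x, y, z) ∈ YD1star D)
    (hsub : ¬ (p : ℤ) ∣ u * y - v * x) : pRaisePlus u v (x, y, z) ∈ YD1star (p * D) := by
  have hp' : Prime (p : ℤ) := Nat.prime_iff_prime_int.mp hp
  obtain ⟨⟨-, -, hz⟩, heq, hcop⟩ := mem_YD1star_iff.mp h
  refine mem_YD1star_iff.mpr ⟨⟨?_, fun h0 => hsub (h0 ▸ dvd_zero _), hz⟩, ?_, ?_⟩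
  · intro h0
    have hdvd : (p : ℤ) ∣ u * (u * y - v * x) := ⟨y, by linear_combination -v * h0 - y * hpuv⟩
    exact (hp'.dvd_or_dvd hdvd).elim
      (natCast_not_dvd_left_of_eq_sq_add_three_mul_sq hp hp3 hpuv) hsub
  · push_cast
    linear_combination (u ^ 2 + 3 * v ^ 2) * heq - 4 * D * z ^ 3 * hpuv
  · intro ℓ hℓ hℓsub
    have hℓp : ℓ ≠ p := by
      rintro rfl
      exact hsub hℓsub
    have huv : ¬ (ℓ : ℤ) ∣ u ^ 2 + 3 * v ^ 2 := by
      rw [← hpuv, Int.natCast_dvd_natCast, Nat.prime_dvd_prime_iff_eq hℓ hp]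
      exact hℓp
    have hℓy (hdvd : (ℓ : ℤ) ∣ D * z ^ 3) : (ℓ : ℤ) ∣ y := by
      refine dvd_of_dvd_sub_of_dvd_norm (Nat.prime_iff_prime_int.mp hℓ) huv hℓsub ?_
      rw [heq, mul_assoc]
      exact hdvd.mul_left 4
    refine ⟨fun hℓz => ?_, fun hℓD => ?_⟩
    · exact (hcop ℓ hℓ (hℓy ((dvd_pow hℓz three_ne_zero).mul_left _))).1 hℓz
    · have hℓD' : ℓ ^ 2 ∣ D :=
        (((Nat.coprime_primes hℓ hp).mpr hℓp).pow_left 2).dvd_of_dvd_mul_left hℓD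
      have hdvd : (ℓ : ℤ) ∣ D := by exact_mod_cast (dvd_pow_self ℓ two_ne_zero).trans hℓD'
      exact (hcop ℓ hℓ (hℓy (hdvd.mul_right _))).2 hℓD'

lemma pRaisePlus_mem_YD1star_iff (hp : p.Prime) (hp3 : p ≠ 3)
    (hpuv : (p : ℤ) = u ^ 2 + 3 * v ^ 2) (h : (x, y, z) ∈ YD1star D) :
    pRaisePlus u v (x, y, z) ∈ YD1star (p * D) ↔ ¬ (p : ℤ) ∣ u * y - v * x := by
  refine ⟨fun hmem hsub => ?_, pRaisePlus_mem_YD1star_of_not_dvd hp hp3 hpuv h⟩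
  obtain ⟨hz, hpD⟩ := (mem_YD1star_iff.mp hmem).2.2 p hp hsub
  rcases (dvd_sub_or_dvd_add_iff_of_mem_YD1star hp hpuv h).mp (Or.inl hsub) with hD | hz'
  · exact hpD (pow_two p ▸ mul_dvd_mul_left p hD)
  · exact hz hz'

lemma pRaiseMinus_mem_YD1star_iff (hp : p.Prime) (hp3 : p ≠ 3)
    (hpuv : (p : ℤ) = u ^ 2 + 3 * v ^ 2) (h : (x, y, z) ∈ YD1star D) :
    pRaiseMinus u v (x, y, z) ∈ YD1star (p * D) ↔ ¬ (p : ℤ) ∣ u * y + v * x := by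
  rw [pRaiseMinus_eq_pRaisePlus_neg,
    pRaisePlus_mem_YD1star_iff hp hp3 (by rw [hpuv, neg_sq]) h, neg_mul, sub_neg_eq_add]

end Raising

theorem stmt_10_general {D p : ℕ} (hp : p.Prime) (hp3 : p ≠ 3) {u v : ℤ}
    (hpuv : (p : ℤ) = u ^ 2 + 3 * v ^ 2) {x y z : ℤ} (h : (x, y, z) ∈ YD1star D) :
    (¬ p ∣ D → ¬ (p : ℤ) ∣ z →
      pRaisePlus u v (x, y, z) ∈ YD1star (p * D) ∧
      pRaiseMinus u v (x, y, z) ∈ YD1star (p * D)) ∧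
    (p ∣ D ∨ (p : ℤ) ∣ z →
      Xor (pRaisePlus u v (x, y, z) ∈ YD1star (p * D))
        (pRaiseMinus u v (x, y, z) ∈ YD1star (p * D))) := by
  have hsome := dvd_sub_or_dvd_add_iff_of_mem_YD1star hp hpuv h
  have hnot_both := not_dvd_sub_and_dvd_add_of_mem_YD1star hp hp3 hpuv h
  rw [pRaisePlus_mem_YD1star_iff hp hp3 hpuv h, pRaiseMinus_mem_YD1star_iff hp hp3 hpuv h,
    xor_not_not, xor_iff_or_and_not_and]
  exact ⟨fun hD hz => not_or.mp (mt hsome.mp (not_or.mpr ⟨hD, hz⟩)),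
    fun hDz => ⟨hsome.mpr hDz, hnot_both⟩⟩

theorem stmt_10 (D : ℕ) (hD : Admissible D) (p : ℕ) (hp : p.Prime) (hp1 : p % 3 = 1)
    (u v : ℤ) (hu : 0 < u) (hv : 0 < v) (hpuv : (p : ℤ) = u ^ 2 + 3 * v ^ 2)
    (hgcd : Int.gcd u (3 * v) = 1)
    (x₀ y₀ z₀ : ℤ) (hxyz : (x₀, y₀, z₀) ∈ YD1star D) :
    (¬ p ∣ D → ¬ ((p : ℤ) ∣ z₀) →
      pRaisePlus u v (x₀, y₀, z₀) ∈ YD1star (p * D) ∧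
      pRaiseMinus u v (x₀, y₀, z₀) ∈ YD1star (p * D)) ∧
    (¬ p ∣ D → (p : ℤ) ∣ z₀ →
      Xor' (pRaisePlus u v (x₀, y₀, z₀) ∈ YD1star (p * D))
        (pRaiseMinus u v (x₀, y₀, z₀) ∈ YD1star (p * D))) ∧
    (p ∣ D → ¬ p ^ 2 ∣ D →
      Xor' (pRaisePlus u v (x₀, y₀, z₀) ∈ YD1star (p * D))
        (pRaiseMinus u v (x₀, y₀, z₀) ∈ YD1star (p * D))) := by
  obtain ⟨hboth, hone⟩ := stmt_10_general hp (by omega) hpuv hxyz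
  exact ⟨hboth, fun _ hz => hone (Or.inr hz), fun hpD _ => hone (Or.inl hpD)⟩
end

section
/- Let D be an admissible integer, p a prime with p ≡ 1 (mod 3) and p² ∤ D, written p = u² + 3v² with u,v > 0 and gcd(u,3v) = 1. Suppose (x₀,y₀,z₀) ∈ Y_D^1(ℤ)* and [p]⁺(x₀,y₀,z₀) ∈ Y_{pD}^1(ℤ)* (respectively [p]⁻(x₀,y₀,z₀) ∈ Y_{pD}^1(ℤ)*). Then [p]_*([p]⁺(x₀,y₀,z₀)) = (x₀,y₀,z₀) (respectively [p]_*([p]⁻(x₀,y₀,z₀)) = (x₀,y₀,z₀)). -/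
/-!
Identify `(x, y, z)` with `x + y√-3` together with `z`, so that `x² + 3y²` is a norm. For
`π = u + v√-3` of norm `p`, the maps `[p]⁺` and `[p]⁻` are multiplication by `π̄` and by `π`, and
`[p]_*` multiplies by `π` if the `√-3`-coordinate of the result is divisible by `p`, by `π̄`
otherwise, and then divides by `p`. As `ππ̄ = p`, lowering always undoes `[p]⁺`. It undoes `[p]⁻`
unless `p` divides the `√-3`-coordinate of `π²(x + y√-3)`. That coordinate is congruent modulo `p`
to `2u` times the one of `π(x + y√-3)`; here `p ∤ 2u`, and `p` divides no `√-3`-coordinate of a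
point of `Y_{pD}^1(ℤ)*`.
-/

section LevelMaps

variable (u v : ℤ) (q : ℤ × ℤ × ℤ)

lemma pRaiseMinus_pRaisePlus :
    pRaiseMinus u v (pRaisePlus u v q) =
      ((u ^ 2 + 3 * v ^ 2) * q.1, (u ^ 2 + 3 * v ^ 2) * q.2.1, q.2.2) := by
  ext <;> simp only [pRaiseMinus, pRaisePlus] <;> ring

lemma pRaisePlus_pRaiseMinus :
    pRaisePlus u v (pRaiseMinus u v q) =
      ((u ^ 2 + 3 * v ^ 2) * q.1, (u ^ 2 + 3 * v ^ 2) * q.2.1, q.2.2) := by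
  ext <;> simp only [pRaiseMinus, pRaisePlus] <;> ring

lemma pRaiseMinus_pRaiseMinus_snd_fst :
    (pRaiseMinus u v (pRaiseMinus u v q)).2.1 =
      2 * u * (pRaiseMinus u v q).2.1 - (u ^ 2 + 3 * v ^ 2) * q.2.1 := by
  simp only [pRaiseMinus]
  ring

variable {u v q} {n : ℤ} {r : ℤ × ℤ × ℤ}

lemma pLower_eq_of_pRaiseMinus_eq (hn : n ≠ 0)
    (h : pRaiseMinus u v q = (n * r.1, n * r.2.1, r.2.2)) : pLower n u v q = r := by
  obtain ⟨hx, hy, hz⟩ := by simpa only [pRaiseMinus, Prod.mk.injEq] using h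
  rw [pLower, if_pos ⟨_, hy⟩, hx, hy, hz, Int.mul_ediv_cancel_left _ hn,
    Int.mul_ediv_cancel_left _ hn]

lemma pLower_eq_of_pRaisePlus_eq (hn : n ≠ 0) (hnd : ¬ n ∣ (pRaiseMinus u v q).2.1)
    (h : pRaisePlus u v q = (n * r.1, n * r.2.1, r.2.2)) : pLower n u v q = r := by
  obtain ⟨hx, hy, hz⟩ := by simpa only [pRaisePlus, Prod.mk.injEq] using h
  rw [pLower, if_neg (show ¬ n ∣ u * q.2.1 + v * q.1 from hnd), hx, hy, hz,
    Int.mul_ediv_cancel_left _ hn, Int.mul_ediv_cancel_left _ hn]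

theorem pLower_pRaisePlus (hn : n ≠ 0) (h : n = u ^ 2 + 3 * v ^ 2) :
    pLower n u v (pRaisePlus u v q) = q :=
  pLower_eq_of_pRaiseMinus_eq hn (h ▸ pRaiseMinus_pRaisePlus u v q)

theorem pLower_pRaiseMinus (h : n = u ^ 2 + 3 * v ^ 2)
    (hnd : ¬ n ∣ 2 * u * (pRaiseMinus u v q).2.1) :
    pLower n u v (pRaiseMinus u v q) = q := by
  have hn : n ≠ 0 := by
    rintro rfl
    have hu : u = 0 := by nlinarith [sq_nonneg u, sq_nonneg v]
    simp [hu] at hnd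
  refine pLower_eq_of_pRaisePlus_eq hn ?_ (h ▸ pRaisePlus_pRaiseMinus u v q)
  rwa [pRaiseMinus_pRaiseMinus_snd_fst, ← h, dvd_sub_left (dvd_mul_right n q.2.1)]

end LevelMaps

lemma not_dvd_left_of_eq_sq_add_three_mul_sq {n u v : ℤ} (hn : 1 < n) (hu : u ≠ 0)
    (h : n = u ^ 2 + 3 * v ^ 2) : ¬ n ∣ u := by
  intro hdvd
  have hle : n ^ 2 ≤ u ^ 2 := Int.le_of_dvd (by positivity) (pow_dvd_pow_of_dvd hdvd 2)
  nlinarith [sq_nonneg v]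

lemma sq_dvd_sq_add_mul_sq {R : Type*} [CommRing R] {p x y c : R} (hp : Prime p) (hy : p ∣ y)
    (h : p ∣ x ^ 2 + c * y ^ 2) : p ^ 2 ∣ x ^ 2 + c * y ^ 2 := by
  have hx : p ∣ x :=
    hp.dvd_of_dvd_pow ((dvd_add_left ((dvd_pow hy two_ne_zero).mul_left c)).1 h)
  exact dvd_add (pow_dvd_pow_of_dvd hx 2) ((pow_dvd_pow_of_dvd hy 2).mul_left c)

theorem not_dvd_snd_fst_of_mem_YD1star {D p : ℕ} (hp : p.Prime) (hp2 : p ≠ 2)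
    {q : ℤ × ℤ × ℤ} (hq : q ∈ YD1star (p * D)) : ¬ (p : ℤ) ∣ q.2.1 := by
  obtain ⟨⟨-, hnorm, hgcd⟩, hstar⟩ := hq
  intro hy
  have hpZ : Prime (p : ℤ) := Nat.prime_iff_prime_int.mp hp
  have hfactor : q.1 ^ 2 + 3 * q.2.1 ^ 2 = p * (2 ^ 2 * (D * q.2.2 ^ 3)) := by
    rw [hnorm]
    push_cast
    ring
  have hsq : (p : ℤ) ^ 2 ∣ p * (2 ^ 2 * (D * q.2.2 ^ 3)) :=
    hfactor ▸ sq_dvd_sq_add_mul_sq hpZ hy (hfactor ▸ dvd_mul_right _ _)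
  rw [sq, mul_dvd_mul_iff_left hpZ.ne_zero] at hsq
  rcases hpZ.dvd_or_dvd hsq with htwo | hDz
  · have htwo' : p ∣ 2 := by exact_mod_cast hpZ.dvd_of_dvd_pow htwo
    exact hp2 ((Nat.prime_dvd_prime_iff_eq hp Nat.prime_two).mp htwo')
  rcases hpZ.dvd_or_dvd hDz with hD | hz
  · have hsqD : p ^ 2 ∣ p * D := sq p ▸ mul_dvd_mul_left p (Int.natCast_dvd_natCast.mp hD)
    exact hstar p hp hsqD hy
  · have hone : (p : ℤ) ∣ Int.gcd q.2.1 q.2.2 :=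
      Int.dvd_coe_gcd hy (hpZ.dvd_of_dvd_pow hz)
    rw [hgcd] at hone
    exact hpZ.not_dvd_one (by exact_mod_cast hone)

theorem stmt_12_general (D : ℕ) {p : ℕ} (hp : p.Prime) {u v : ℤ} (hu : u ≠ 0)
    (hpuv : (p : ℤ) = u ^ 2 + 3 * v ^ 2) (q : ℤ × ℤ × ℤ) :
    pLower p u v (pRaisePlus u v q) = q ∧
    (pRaiseMinus u v q ∈ YD1star (p * D) → pLower p u v (pRaiseMinus u v q) = q) := by
  have hpZ : Prime (p : ℤ) := Nat.prime_iff_prime_int.mp hp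
  refine ⟨pLower_pRaisePlus hpZ.ne_zero hpuv, fun hq => pLower_pRaiseMinus hpuv ?_⟩
  have hp2 : p ≠ 2 := by
    rintro rfl
    exact sq_add_three_mul_sq_ne_two u v hpuv.symm
  have htwo : ¬ (p : ℤ) ∣ 2 := by
    rwa [Int.natCast_dvd_ofNat, Nat.prime_dvd_prime_iff_eq hp Nat.prime_two]
  have hpu : ¬ (p : ℤ) ∣ u :=
    not_dvd_left_of_eq_sq_add_three_mul_sq (by exact_mod_cast hp.one_lt) hu hpuv
  exact hpZ.not_dvd_mul (hpZ.not_dvd_mul htwo hpu) (not_dvd_snd_fst_of_mem_YD1star hp hp2 hq)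

theorem stmt_12 (D : ℕ) (hD : Admissible D) (p : ℕ) (hp : p.Prime) (hp1 : p % 3 = 1)
    (hp2 : ¬ p ^ 2 ∣ D) (u v : ℤ) (hu : 0 < u) (hv : 0 < v)
    (hpuv : (p : ℤ) = u ^ 2 + 3 * v ^ 2) (hgcd : Int.gcd u (3 * v) = 1)
    (x₀ y₀ z₀ : ℤ) (hxyz : (x₀, y₀, z₀) ∈ YD1star D) :
    (pRaisePlus u v (x₀, y₀, z₀) ∈ YD1star (p * D) →
      pLower (p : ℤ) u v (pRaisePlus u v (x₀, y₀, z₀)) = (x₀, y₀, z₀)) ∧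
    (pRaiseMinus u v (x₀, y₀, z₀) ∈ YD1star (p * D) →
      pLower (p : ℤ) u v (pRaiseMinus u v (x₀, y₀, z₀)) = (x₀, y₀, z₀)) := by
  have hraise := stmt_12_general D hp hu.ne' hpuv (x₀, y₀, z₀)
  exact ⟨fun _ => hraise.1, hraise.2⟩
end

section
/- Let D be an admissible integer, p a prime with p ≡ 1 (mod 3) and p ∣ D, written p = u² + 3v² with u,v > 0 and gcd(u,3v) = 1. Then for every (x₀,y₀,z₀) ∈ Y_D^1(ℤ)*, exactly one of [p]⁺([p]_*(x₀,y₀,z₀)) and [p]⁻([p]_*(x₀,y₀,z₀)) equals (x₀,y₀,z₀). -/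
/-!
Attach to `(x, y, z)` the number `α = x + y√-3`, and let `π = u + v√-3`, of norm `p`. Then `[p]⁺`
is multiplication by the conjugate `π'` and `[p]⁻` is multiplication by `π`, while `[p]_*` divides
`α` by `π'` when `π'` divides it, and by `π` otherwise. Since `p` is prime and divides the norm of
`α`, one of `π`, `π'` divides `α`, so one of the raising maps undoes `[p]_*`. Both cannot, because
`π ≠ π'` and `α ≠ 0`.
-/

section BinaryForm

variable {R : Type*} [CommRing R] {p n u v x y : R}

theorem dvd_add_or_dvd_sub_of_dvd_sq_add_mul_sq (hp : Prime p) (huv : p ∣ u ^ 2 + n * v ^ 2)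
    (hxy : p ∣ x ^ 2 + n * y ^ 2) : p ∣ u * y + v * x ∨ p ∣ u * y - v * x := by
  apply hp.dvd_or_dvd
  have factor : (u * y + v * x) * (u * y - v * x) =
      (u ^ 2 + n * v ^ 2) * y ^ 2 - v ^ 2 * (x ^ 2 + n * y ^ 2) := by ring
  rw [factor]
  exact dvd_sub (huv.mul_right _) (hxy.mul_left _)

theorem dvd_sub_of_dvd_add_of_dvd_sq_add_mul_sq (hp : Prime p) (huv : p ∣ u ^ 2 + n * v ^ 2)
    (h : p ∣ u * y + v * x) : p ∣ u * x - n * v * y := by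
  have brahmagupta : (u * x - n * v * y) ^ 2 =
      (u ^ 2 + n * v ^ 2) * (x ^ 2 + n * y ^ 2) - n * (u * y + v * x) ^ 2 := by ring
  apply hp.dvd_of_dvd_pow (n := 2)
  rw [brahmagupta]
  exact dvd_sub (huv.mul_right _) ((dvd_pow h two_ne_zero).mul_left _)

theorem right_ne_zero_of_prime_sq_add_mul_sq [IsCancelMulZero R] (hp : Prime (u ^ 2 + n * v ^ 2)) :
    v ≠ 0 := by
  rintro rfl
  rw [zero_pow two_ne_zero, mul_zero, add_zero] at hp
  exact not_prime_pow (by decide : 2 ≠ 1) hp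

end BinaryForm

section LevelMaps

variable {u v : ℤ}

theorem pRaisePlus_neg (u v : ℤ) : pRaisePlus u (-v) = pRaiseMinus u v := by
  funext q
  simp [pRaisePlus, pRaiseMinus, sub_eq_add_neg]

theorem exists_pRaisePlus_eq {x y : ℤ} (hp : Prime (u ^ 2 + 3 * v ^ 2))
    (h : u ^ 2 + 3 * v ^ 2 ∣ u * y + v * x) (z : ℤ) :
    ∃ r, pRaisePlus u v r = (x, y, z) := by
  obtain ⟨a, ha⟩ := dvd_sub_of_dvd_add_of_dvd_sq_add_mul_sq hp dvd_rfl h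
  obtain ⟨b, hb⟩ := h
  have hx : u * a + 3 * v * b = x := by
    apply mul_left_cancel₀ hp.ne_zero
    linear_combination -u * ha - 3 * v * hb
  have hy : u * b - v * a = y := by
    apply mul_left_cancel₀ hp.ne_zero
    linear_combination -u * hb + v * ha
  exact ⟨(a, b, z), by rw [← hx, ← hy]; rfl⟩

theorem exists_pRaiseMinus_eq {x y : ℤ} (hp : Prime (u ^ 2 + 3 * v ^ 2))
    (h : u ^ 2 + 3 * v ^ 2 ∣ u * y - v * x) (z : ℤ) :
    ∃ r, pRaiseMinus u v r = (x, y, z) := by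
  rw [← pRaisePlus_neg]
  exact exists_pRaisePlus_eq (by rwa [neg_sq]) (by rwa [neg_mul, ← sub_eq_add_neg, neg_sq]) z

theorem pLower_pRaisePlus_s13 (huv : u ^ 2 + 3 * v ^ 2 ≠ 0) (r : ℤ × ℤ × ℤ) :
    pLower (u ^ 2 + 3 * v ^ 2) u v (pRaisePlus u v r) = r := by
  obtain ⟨a, b, z⟩ := r
  have hre : u * (u * a + 3 * v * b) - 3 * v * (u * b - v * a) = (u ^ 2 + 3 * v ^ 2) * a := by ring
  have him : u * (u * b - v * a) + v * (u * a + 3 * v * b) = (u ^ 2 + 3 * v ^ 2) * b := by ring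
  simp [pLower, pRaisePlus, hre, him, huv]

theorem pLower_pRaiseMinus_s13 (huv : u ^ 2 + 3 * v ^ 2 ≠ 0) {r : ℤ × ℤ × ℤ}
    (h : ¬ u ^ 2 + 3 * v ^ 2 ∣
      u * (pRaiseMinus u v r).2.1 + v * (pRaiseMinus u v r).1) :
    pLower (u ^ 2 + 3 * v ^ 2) u v (pRaiseMinus u v r) = r := by
  obtain ⟨a, b, z⟩ := r
  have hre : u * (u * a - 3 * v * b) + 3 * v * (u * b + v * a) = (u ^ 2 + 3 * v ^ 2) * a := by ring
  have him : u * (u * b + v * a) - v * (u * a - 3 * v * b) = (u ^ 2 + 3 * v ^ 2) * b := by ring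
  rw [pLower, if_neg h]
  simp [pRaiseMinus, hre, him, huv]

theorem eq_zero_of_pRaisePlus_eq_of_pRaiseMinus_eq (hv : v ≠ 0) {r : ℤ × ℤ × ℤ} {x y z : ℤ}
    (hplus : pRaisePlus u v r = (x, y, z)) (hminus : pRaiseMinus u v r = (x, y, z)) :
    x = 0 ∧ y = 0 := by
  obtain ⟨a, b, c⟩ := r
  simp only [pRaisePlus, pRaiseMinus, Prod.mk.injEq] at hplus hminus
  obtain ⟨hx, hy, -⟩ := hplus
  obtain ⟨hx', hy', -⟩ := hminus
  have ha : a = 0 := mul_left_cancel₀ hv (by linarith)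
  have hb : b = 0 := mul_left_cancel₀ hv (by linarith)
  simp [← hx, ← hy, ha, hb]

end LevelMaps

theorem fst_ne_zero_of_mem_YD1 {D : ℕ} {x y z : ℤ} (h : (x, y, z) ∈ YD1 D) : x ≠ 0 :=
  left_ne_zero_of_mul (left_ne_zero_of_mul h.1)

theorem dvd_sq_add_three_mul_sq_of_mem_YD1 {D : ℕ} {d x y z : ℤ} (hd : d ∣ D)
    (h : (x, y, z) ∈ YD1 D) : d ∣ x ^ 2 + 3 * y ^ 2 := by
  have hform : x ^ 2 + 3 * y ^ 2 = 4 * D * z ^ 3 := h.2.1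
  rw [hform]
  exact (hd.mul_left 4).mul_right _

theorem stmt_13_general {p u v x y : ℤ} (hp : Prime p) (hpuv : p = u ^ 2 + 3 * v ^ 2)
    (hpxy : p ∣ x ^ 2 + 3 * y ^ 2) (hxy : ¬ (x = 0 ∧ y = 0)) (z : ℤ) :
    Xor (pRaisePlus u v (pLower p u v (x, y, z)) = (x, y, z))
      (pRaiseMinus u v (pLower p u v (x, y, z)) = (x, y, z)) := by
  subst hpuv
  have hv : v ≠ 0 := right_ne_zero_of_prime_sq_add_mul_sq hp
  by_cases h : u ^ 2 + 3 * v ^ 2 ∣ u * y + v * x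
  · obtain ⟨r, hr⟩ := exists_pRaisePlus_eq hp h z
    have hlower : pLower (u ^ 2 + 3 * v ^ 2) u v (x, y, z) = r := by
      rw [← hr, pLower_pRaisePlus_s13 hp.ne_zero]
    rw [hlower]
    exact .inl ⟨hr, fun hr' ↦ hxy (eq_zero_of_pRaisePlus_eq_of_pRaiseMinus_eq hv hr hr')⟩
  · have h' := (dvd_add_or_dvd_sub_of_dvd_sq_add_mul_sq hp dvd_rfl hpxy).resolve_left h
    obtain ⟨r, hr⟩ := exists_pRaiseMinus_eq hp h' z
    have hlower : pLower (u ^ 2 + 3 * v ^ 2) u v (x, y, z) = r := by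
      rw [← hr, pLower_pRaiseMinus_s13 hp.ne_zero (by rwa [hr])]
    rw [hlower]
    exact .inr ⟨hr, fun hr' ↦ hxy (eq_zero_of_pRaisePlus_eq_of_pRaiseMinus_eq hv hr' hr)⟩

theorem stmt_13 (D : ℕ) (hD : Admissible D) (p : ℕ) (hp : p.Prime) (hp1 : p % 3 = 1)
    (hpD : p ∣ D) (u v : ℤ) (hu : 0 < u) (hv : 0 < v)
    (hpuv : (p : ℤ) = u ^ 2 + 3 * v ^ 2) (hgcd : Int.gcd u (3 * v) = 1)
    (x₀ y₀ z₀ : ℤ) (hxyz : (x₀, y₀, z₀) ∈ YD1star D) :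
    Xor' (pRaisePlus u v (pLower (p : ℤ) u v (x₀, y₀, z₀)) = (x₀, y₀, z₀))
      (pRaiseMinus u v (pLower (p : ℤ) u v (x₀, y₀, z₀)) = (x₀, y₀, z₀)) := by
  exact stmt_13_general (Nat.prime_iff_prime_int.mp hp) hpuv
    (dvd_sq_add_three_mul_sq_of_mem_YD1 (Int.natCast_dvd_natCast.mpr hpD) hxyz.1)
    (fun h ↦ fst_ne_zero_of_mem_YD1 hxyz.1 h.1) z₀
end

section
/- Let D be an admissible integer with 3 ∤ D, and let u, v be positive integers with D = u² + 3v² and gcd(u, 3v) = 1. Suppose (x₀,y₀,z₀) ∈ Y_1^1(ℤ). Then (ux₀ − 3vy₀, uy₀ + vx₀, z₀) ∈ Y_D^1(ℤ)* if and only if gcd(D, z₀, uy₀ + vx₀) = 1; and (ux₀ + 3vy₀, uy₀ − vx₀, z₀) ∈ Y_D^1(ℤ)* if and only if gcd(D, z₀, uy₀ − vx₀) = 1. -/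
/-!
In `ℤ[√-3]`, the map `[p]⁻` is multiplication of `x + y√-3` by `u + v√-3`, of norm `D`. Let `Y` be
the `√-3`-coefficient `u * y + v * x` of the product. Everything rests on the identity
`Y * (u * y - v * x) = D * y ^ 2 - v ^ 2 * (x ^ 2 + 3 * y ^ 2)`, in which the last norm is
`4 * z ^ 3` on a point of level one. A common divisor of `Y` and `z` prime to `D` divides
`D * y ^ 2`, hence is trivial. Symmetrically, a common divisor of `Y` and `D` divides
`4 * v ^ 2 * z ^ 3`, hence is trivial once `Y` is prime to `z`; this gives the starred condition.
The map `[p]⁺` is `[p]⁻` with `v` replaced by `-v`.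
-/

section CommRing

variable {R : Type*} [CommRing R] {n u v x y : R}

lemma isCoprime_mul_sq_add_mul_sq (h : IsCoprime u (n * v)) :
    IsCoprime (n * v) (u ^ 2 + n * v ^ 2) := by
  rw [show n * v ^ 2 = n * v * v by ring]
  exact h.symm.pow_right.add_mul_left_right v

lemma isUnit_of_dvd_mul_add_mul_of_dvd_sq_add_mul_sq {d : R} (hdY : d ∣ u * y + v * x)
    (hdN : d ∣ x ^ 2 + n * y ^ 2) (hd : IsCoprime d (u ^ 2 + n * v ^ 2)) (hdy : IsCoprime d y) :
    IsUnit d := by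
  have conj_identity : (u ^ 2 + n * v ^ 2) * y ^ 2 =
      (u * y + v * x) * (u * y - v * x) + (x ^ 2 + n * y ^ 2) * v ^ 2 := by ring
  have hd_dvd : d ∣ (u ^ 2 + n * v ^ 2) * y ^ 2 :=
    conj_identity ▸ dvd_add (hdY.mul_right _) (hdN.mul_right _)
  exact (hd.mul_right hdy.pow_right).isUnit_of_dvd' dvd_rfl hd_dvd

lemma mul_pow_ne_mul_pow_of_prime [IsDomain R] {p m z : R} {k l : ℕ} (hp : Prime p)
    (hpm : ¬ p ∣ m) (hyz : IsCoprime y z) (hl : 2 ≤ l) : p * y ^ k ≠ m * z ^ l := by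
  intro h
  have hpz : p ∣ z :=
    hp.dvd_of_dvd_pow ((hp.dvd_or_dvd (Dvd.intro _ h)).resolve_left hpm)
  have hpp : p * p ∣ p * y ^ k := by
    rw [h, ← sq]
    exact ((pow_dvd_pow_of_dvd hpz 2).trans (pow_dvd_pow z hl)).mul_left m
  have hpy : p ∣ y := hp.dvd_of_dvd_pow ((mul_dvd_mul_iff_left hp.ne_zero).1 hpp)
  exact hp.not_isUnit (hyz.isUnit_of_dvd' hpy hpz)

end CommRing

section Int

variable {n u v x y z : ℤ}

lemma isCoprime_mul_add_mul_iff_gcd_eq_one (hyz : IsCoprime y z) (hz : z ∣ x ^ 2 + n * y ^ 2) :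
    IsCoprime (u * y + v * x) z ↔
      Int.gcd (u ^ 2 + n * v ^ 2) (Int.gcd z (u * y + v * x)) = 1 := by
  have hdz : (Int.gcd z (u * y + v * x) : ℤ) ∣ z := Int.gcd_dvd_left ..
  rw [isCoprime_comm, Int.isCoprime_iff_gcd_eq_one]
  refine ⟨fun h ↦ by rw [h, Nat.cast_one, Int.gcd_one_right], fun h ↦ ?_⟩
  have hd : IsUnit (Int.gcd z (u * y + v * x) : ℤ) :=
    isUnit_of_dvd_mul_add_mul_of_dvd_sq_add_mul_sq (Int.gcd_dvd_right ..) (hdz.trans hz)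
      (Int.isCoprime_iff_gcd_eq_one.2 h).symm (hyz.symm.of_isCoprime_of_dvd_left hdz)
  exact Nat.isUnit_iff.1 (Int.ofNat_isUnit.1 hd)

lemma isCoprime_mul_add_mul_sq_add_mul_sq {c : ℤ} {k : ℕ} (hv : IsCoprime v (u ^ 2 + n * v ^ 2))
    (hc : IsCoprime c (u ^ 2 + n * v ^ 2)) (heq : x ^ 2 + n * y ^ 2 = c * z ^ k)
    (hYz : IsCoprime (u * y + v * x) z) : IsCoprime (u * y + v * x) (u ^ 2 + n * v ^ 2) := by
  -- The coefficient is symmetric in the two factors, so the previous criterion applies to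
  -- `(u, v)` in place of `(x, y)`.
  have hswap : u * y + v * x = x * v + y * u := by ring
  rw [hswap] at hYz ⊢
  rw [isCoprime_mul_add_mul_iff_gcd_eq_one hv dvd_rfl, ← Int.isCoprime_iff_gcd_eq_one, heq]
  exact (hc.of_isCoprime_of_dvd_right (Int.gcd_dvd_left ..)).mul_left
    (hYz.of_isCoprime_of_dvd_left (Int.gcd_dvd_right ..)).symm.pow_left

lemma mul_add_mul_ne_zero_of_isCoprime (hn : 1 < n) (hy : y ≠ 0)
    (h : IsCoprime (u * y + v * x) (u ^ 2 + n * v ^ 2)) : u * y + v * x ≠ 0 := by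
  intro hY
  have hnonneg : 0 ≤ u ^ 2 + n * v ^ 2 := by positivity
  have hnorm : u ^ 2 + n * v ^ 2 = 1 := by
    rw [hY, isCoprime_zero_left, Int.isUnit_iff] at h
    omega
  have hv : v = 0 := by
    by_contra hv
    nlinarith [sq_nonneg u, sq_pos_of_ne_zero hv]
  have hu : u = 0 := by simpa [hv, hy] using hY
  simp [hu, hv] at hnorm

end Int

lemma Admissible.odd {D : ℕ} (hD : Admissible D) : Odd D := by
  obtain ⟨-, -, D₁, hDD₁, hD₁⟩ := hD
  by_contra heven
  have htwo : 2 ∣ D₁ := by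
    rw [Nat.not_odd_iff_even, even_iff_two_dvd] at heven
    omega
  rcases hD₁ with rfl | hprime
  · omega
  · exact absurd (hprime 2 Nat.prime_two htwo) (by decide)

lemma pRaisePlus_eq_pRaiseMinus_neg (u v : ℤ) (q : ℤ × ℤ × ℤ) :
    pRaisePlus u v q = pRaiseMinus u (-v) q := by
  simp only [pRaisePlus, pRaiseMinus, mul_neg, neg_mul, neg_neg, sub_eq_add_neg]

lemma mem_YD1star_of_isCoprime {D : ℕ} {x y z : ℤ} (h3 : IsCoprime (3 : ℤ) D) (hy : y ≠ 0)
    (hz : z ≠ 0) (heq : x ^ 2 + 3 * y ^ 2 = 4 * D * z ^ 3) (hyz : IsCoprime y z)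
    (hyD : IsCoprime y D) : (x, y, z) ∈ YD1star D := by
  have hx : x ≠ 0 := by
    rintro rfl
    have h34D : IsCoprime (3 : ℤ) (4 * D) := IsCoprime.mul_right (by norm_num) h3
    have hnot_dvd : ¬ (3 : ℤ) ∣ 4 * D := fun h ↦
      Int.prime_three.not_isUnit (h34D.isUnit_of_dvd' dvd_rfl h)
    exact mul_pow_ne_mul_pow_of_prime Int.prime_three hnot_dvd hyz (by norm_num : 2 ≤ 3)
      (by simpa using heq)
  refine ⟨⟨mul_ne_zero (mul_ne_zero hx hy) hz, heq, Int.isCoprime_iff_gcd_eq_one.1 hyz⟩, ?_⟩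
  intro ℓ hℓ hℓD hℓy
  have hℓD' : (ℓ : ℤ) ∣ D := Int.natCast_dvd_natCast.2 ((dvd_pow_self ℓ two_ne_zero).trans hℓD)
  exact (Nat.prime_iff_prime_int.1 hℓ).not_isUnit (hyD.isUnit_of_dvd' hℓy hℓD')

lemma pRaiseMinus_mem_YD1star_iff_s17 {D : ℕ} {u v x y z : ℤ} (hD : Odd D)
    (hDuv : (D : ℤ) = u ^ 2 + 3 * v ^ 2) (huv : IsCoprime u (3 * v))
    (hxyz : (x, y, z) ∈ YD1 1) :
    pRaiseMinus u v (x, y, z) ∈ YD1star D ↔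
      Int.gcd (D : ℤ) (Int.gcd z (u * y + v * x)) = 1 := by
  obtain ⟨hne, heq, hgcd⟩ := hxyz
  simp only [Nat.cast_one, mul_one] at hne heq hgcd
  have hyz : IsCoprime y z := Int.isCoprime_iff_gcd_eq_one.2 hgcd
  have hz_dvd : z ∣ x ^ 2 + 3 * y ^ 2 := heq ▸ (dvd_pow_self z three_ne_zero).mul_left 4
  have h3v : IsCoprime (3 * v) (D : ℤ) := hDuv ▸ isCoprime_mul_sq_add_mul_sq huv
  have h4 : IsCoprime (4 : ℤ) D :=
    IsCoprime.pow_left (m := 2) (Nat.isCoprime_iff_coprime.2 hD.coprime_two_left)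
  have hYz_iff : IsCoprime (u * y + v * x) z ↔
      Int.gcd (D : ℤ) (Int.gcd z (u * y + v * x)) = 1 :=
    hDuv ▸ isCoprime_mul_add_mul_iff_gcd_eq_one hyz hz_dvd
  refine ⟨fun h ↦ hYz_iff.1 (Int.isCoprime_iff_gcd_eq_one.2 h.1.2.2), fun h ↦ ?_⟩
  have hYz : IsCoprime (u * y + v * x) z := hYz_iff.2 h
  have hYD : IsCoprime (u * y + v * x) (D : ℤ) := by
    rw [hDuv] at h3v h4 ⊢
    exact isCoprime_mul_add_mul_sq_add_mul_sq h3v.of_mul_left_right h4 heq hYz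
  have hY : u * y + v * x ≠ 0 := mul_add_mul_ne_zero_of_isCoprime (n := 3) (by norm_num)
    (right_ne_zero_of_mul (left_ne_zero_of_mul hne)) (hDuv ▸ hYD)
  refine mem_YD1star_of_isCoprime h3v.of_mul_left_left hY (right_ne_zero_of_mul hne) ?_ hYz hYD
  calc (u * x - 3 * v * y) ^ 2 + 3 * (u * y + v * x) ^ 2
      = (u ^ 2 + 3 * v ^ 2) * (x ^ 2 + 3 * y ^ 2) := (sq_add_mul_sq_mul_sq_add_mul_sq ..).symm
    _ = 4 * D * z ^ 3 := by rw [← hDuv, heq]; ring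

theorem stmt_17_general (D : ℕ) (hD : Odd D) (u v : ℤ) (hDuv : (D : ℤ) = u ^ 2 + 3 * v ^ 2)
    (hgcd : Int.gcd u (3 * v) = 1) (x₀ y₀ z₀ : ℤ) (hxyz : (x₀, y₀, z₀) ∈ YD1 1) :
    (pRaiseMinus u v (x₀, y₀, z₀) ∈ YD1star D ↔
      Int.gcd (D : ℤ) ((Int.gcd z₀ (u * y₀ + v * x₀) : ℕ) : ℤ) = 1) ∧
    (pRaisePlus u v (x₀, y₀, z₀) ∈ YD1star D ↔
      Int.gcd (D : ℤ) ((Int.gcd z₀ (u * y₀ - v * x₀) : ℕ) : ℤ) = 1) := by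
  have huv : IsCoprime u (3 * v) := Int.isCoprime_iff_gcd_eq_one.2 hgcd
  have huv_neg : IsCoprime u (3 * -v) := by rwa [mul_neg, IsCoprime.neg_right_iff]
  refine ⟨pRaiseMinus_mem_YD1star_iff_s17 hD hDuv huv hxyz, ?_⟩
  rw [pRaisePlus_eq_pRaiseMinus_neg, sub_eq_add_neg, ← neg_mul]
  exact pRaiseMinus_mem_YD1star_iff_s17 hD (by rw [hDuv, neg_sq]) huv_neg hxyz

theorem stmt_17 (D : ℕ) (hD : Admissible D) (h3 : ¬ 3 ∣ D)
    (u v : ℤ) (hu : 0 < u) (hv : 0 < v) (hDuv : (D : ℤ) = u ^ 2 + 3 * v ^ 2)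
    (hgcd : Int.gcd u (3 * v) = 1)
    (x₀ y₀ z₀ : ℤ) (hxyz : (x₀, y₀, z₀) ∈ YD1 1) :
    (pRaiseMinus u v (x₀, y₀, z₀) ∈ YD1star D ↔
      Int.gcd (D : ℤ) ((Int.gcd z₀ (u * y₀ + v * x₀) : ℕ) : ℤ) = 1) ∧
    (pRaisePlus u v (x₀, y₀, z₀) ∈ YD1star D ↔
      Int.gcd (D : ℤ) ((Int.gcd z₀ (u * y₀ - v * x₀) : ℕ) : ℤ) = 1) :=
  stmt_17_general D hD.odd u v hDuv hgcd x₀ y₀ z₀ hxyz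
end

section
/- Let f(X) = X³ − aX + b ∈ ℤ[X] be a cubic polynomial whose discriminant 4a³ − 27b² is a perfect square. If d = gcd(a,b) > 1 is cube-free and for each prime ℓ with ℓ² ∣ d we have ℓ³ ∤ b, then f(X) is irreducible over ℚ. -/
/-!
If `f = X³ - aX + b` has a root `x` in a field, its discriminant is `(3x² - a)²(4a - 3x²)`, and
`4a - 3x²` is the discriminant of the quadratic `f / (X - x)`. So when the discriminant of `f` is
a square, `f` has a second root `y`, and the third one is `-(x + y)`; this gives
`a = x² + xy + y²` and `b = xy(x + y)`. When `a` and `b` lie in an integrally closed ring, so do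
`x` and `y`, and a prime, or any radical element, dividing `a` and `b` divides both
roots, as `x³ = ax - b`. Hence its square divides `a` and its cube divides `b`.
-/

section Field

open Polynomial

variable {K : Type*} [Field K] {a b : K}

lemma irreducible_X_pow_three_sub_C_mul_X_add_C_iff :
    Irreducible (X ^ 3 - C a * X + C b) ↔ ∀ x : K, x ^ 3 - a * x + b ≠ 0 := by
  have hdeg : (X ^ 3 - C a * X + C b).natDegree = 3 := by compute_degree!
  have hne : X ^ 3 - C a * X + C b ≠ 0 := ne_zero_of_natDegree_gt (n := 0) (by omega)
  rw [irreducible_iff_roots_eq_zero_of_degree_le_three (by omega) hdeg.le,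
    Multiset.eq_zero_iff_forall_notMem]
  simp [mem_roots hne]

lemma isSquare_four_mul_sub_of_cubic_root {x : K} (hsq : IsSquare (4 * a ^ 3 - 27 * b ^ 2))
    (hx : x ^ 3 - a * x + b = 0) : IsSquare (4 * a - 3 * x ^ 2) := by
  have hb : b = a * x - x ^ 3 := by linear_combination hx
  by_cases hmult : 3 * x ^ 2 - a = 0
  · exact ⟨3 * x, by linear_combination -4 * hmult⟩
  · have hdiscr : 4 * a - 3 * x ^ 2 = (4 * a ^ 3 - 27 * b ^ 2) / (3 * x ^ 2 - a) ^ 2 := by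
      rw [eq_div_iff (pow_ne_zero 2 hmult), hb]
      ring
    rw [hdiscr]
    exact hsq.div (IsSquare.sq _)

lemma exists_vieta_of_cubic_root [NeZero (2 : K)] {x : K}
    (hsq : IsSquare (4 * a ^ 3 - 27 * b ^ 2)) (hx : x ^ 3 - a * x + b = 0) :
    ∃ y, a = x ^ 2 + x * y + y ^ 2 ∧ b = x * y * (x + y) := by
  obtain ⟨s, hs⟩ := isSquare_four_mul_sub_of_cubic_root hsq hx
  have hdiscrim : discrim 1 x (x ^ 2 - a) = s * s := by
    rw [← hs, discrim]
    ring
  obtain ⟨y, hy⟩ := exists_quadratic_eq_zero one_ne_zero ⟨s, hdiscrim⟩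
  exact ⟨y, by linear_combination -hy, by linear_combination hx - x * hy⟩

end Field

section CommRing

variable {R : Type*} [CommRing R] {a b p : R}

lemma dvd_of_cubic_root {x : R} (hp : IsRadical p) (ha : p ∣ a) (hb : p ∣ b)
    (hx : x ^ 3 - a * x + b = 0) : p ∣ x := by
  have hpow : x ^ 3 = a * x - b := by linear_combination hx
  exact hp 3 x (hpow ▸ dvd_sub (ha.mul_right x) hb)

variable {K : Type*} [Field K] [Algebra R K] [IsFractionRing R K]

lemma exists_algebraMap_eq_of_cubic_root [IsIntegrallyClosed R] {x : K}
    (hx : x ^ 3 - algebraMap R K a * x + algebraMap R K b = 0) :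
    ∃ r, algebraMap R K r = x ∧ r ^ 3 - a * r + b = 0 := by
  have hint : IsIntegral R x :=
    ⟨.X ^ 3 - .C a * .X + .C b, by monicity!, by simpa using hx⟩
  obtain ⟨r, rfl⟩ := IsIntegrallyClosed.isIntegral_iff.1 hint
  exact ⟨r, rfl, IsFractionRing.injective R K (by simpa using hx)⟩

lemma sq_dvd_and_cube_dvd_of_cubic_root [IsIntegrallyClosed R] [NeZero (2 : K)]
    (hsq : IsSquare (4 * a ^ 3 - 27 * b ^ 2)) (hp : IsRadical p) (ha : p ∣ a) (hb : p ∣ b) {x : K}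
    (hx : x ^ 3 - algebraMap R K a * x + algebraMap R K b = 0) : p ^ 2 ∣ a ∧ p ^ 3 ∣ b := by
  have hsqK : IsSquare (4 * algebraMap R K a ^ 3 - 27 * algebraMap R K b ^ 2) := by
    simpa [map_ofNat (algebraMap R K)] using hsq.map (algebraMap R K)
  obtain ⟨y, hay, hby⟩ := exists_vieta_of_cubic_root hsqK hx
  have hy : y ^ 3 - algebraMap R K a * y + algebraMap R K b = 0 := by
    rw [hay, hby]
    ring
  obtain ⟨r, rfl, hr⟩ := exists_algebraMap_eq_of_cubic_root hx
  obtain ⟨t, rfl, ht⟩ := exists_algebraMap_eq_of_cubic_root hy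
  have haR : a = r ^ 2 + r * t + t ^ 2 := IsFractionRing.injective R K (by simpa using hay)
  have hbR : b = r * t * (r + t) := IsFractionRing.injective R K (by simpa using hby)
  obtain ⟨u, rfl⟩ := dvd_of_cubic_root hp ha hb hr
  obtain ⟨v, rfl⟩ := dvd_of_cubic_root hp ha hb ht
  exact ⟨⟨u ^ 2 + u * v + v ^ 2, by rw [haR]; ring⟩, ⟨u * v * (u + v), by rw [hbR]; ring⟩⟩

open Polynomial in
theorem stmt_18_general [IsIntegrallyClosed R] [NeZero (2 : K)]
    (hsq : IsSquare (4 * a ^ 3 - 27 * b ^ 2)) (hp : IsRadical p) (ha : p ∣ a) (hb : p ∣ b)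
    (hpow : ¬(p ^ 2 ∣ a ∧ p ^ 3 ∣ b)) :
    Irreducible (X ^ 3 - C (algebraMap R K a) * X + C (algebraMap R K b)) :=
  irreducible_X_pow_three_sub_C_mul_X_add_C_iff.2 fun _ hx ↦
    hpow (sq_dvd_and_cube_dvd_of_cubic_root hsq hp ha hb hx)

end CommRing

lemma exists_prime_dvd_and_not_pow_dvd {a b : ℤ} (hd : Int.gcd a b ≠ 1)
    (hl : ∀ ℓ : ℕ, ℓ.Prime → ℓ ^ 2 ∣ Int.gcd a b → ¬((ℓ : ℤ) ^ 3 ∣ b)) :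
    ∃ p : ℤ, Prime p ∧ p ∣ a ∧ p ∣ b ∧ ¬(p ^ 2 ∣ a ∧ p ^ 3 ∣ b) := by
  obtain ⟨p, hp, hpd⟩ := Nat.exists_prime_and_dvd hd
  obtain ⟨hpa, hpb⟩ := Int.dvd_coe_gcd_iff.1 (Int.natCast_dvd_natCast.2 hpd)
  refine ⟨p, Nat.prime_iff_prime_int.1 hp, hpa, hpb, fun ⟨ha, hb⟩ ↦ hl p hp ?_ hb⟩
  exact_mod_cast Int.dvd_coe_gcd ha ((pow_dvd_pow _ (by norm_num)).trans hb)

open Polynomial in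
theorem stmt_18 (a b : ℤ) (hsq : ∃ c : ℤ, 4 * a ^ 3 - 27 * b ^ 2 = c ^ 2)
    (hd : 1 < Int.gcd a b)
    (hcf : ∀ ℓ : ℕ, ℓ.Prime → ¬ ℓ ^ 3 ∣ Int.gcd a b)
    (hl : ∀ ℓ : ℕ, ℓ.Prime → ℓ ^ 2 ∣ Int.gcd a b → ¬ ((ℓ : ℤ) ^ 3 ∣ b)) :
    Irreducible (X ^ 3 - C (a : ℚ) * X + C (b : ℚ)) := by
  obtain ⟨p, hp, hpa, hpb, hpow⟩ := exists_prime_dvd_and_not_pow_dvd hd.ne' hl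
  simpa using stmt_18_general (K := ℚ) ((isSquare_iff_exists_sq _).2 hsq) hp.isRadical hpa hpb hpow
end

section
/- Let D > 1 be an admissible integer. Then for any a, b ∈ ℤ: the polynomial X³ − aX + b is irreducible over ℚ with gcd(a,b) = D, discriminant 4a³ − 27b² a nonzero perfect square, and satisfying (for every prime ℓ, ℓ² ∣ a implies ℓ³ ∤ b), if and only if there exists an integer c with (c, b, a) ∈ X_1^D(ℤ)*. -/
/-!
If `X³ - aX + b` has a root `r` and its discriminant is a nonzero square, then its other two roots
`s` and `-r - s` also lie in the base ring, so that `a = r² + rs + s²` and `b = rs(r + s)`. A prime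
`p` dividing `a` and `b` divides every root, hence `p² ∣ a` and `p³ ∣ b`. The condition
`ℓ² ∣ a → ℓ³ ∤ b` excludes this, so a single prime factor of `gcd(a, b)` forces irreducibility.
-/

section DepressedCubic

open Polynomial

variable {R : Type*} [CommRing R]

theorem prime_dvd_of_cubic_eq_zero {p a b r : R} (hp : Prime p) (hpa : p ∣ a) (hpb : p ∣ b)
    (hr : r ^ 3 - a * r + b = 0) : p ∣ r := by
  have hr3 : r ^ 3 = a * r - b := by linear_combination hr
  exact hp.dvd_of_dvd_pow (hr3 ▸ dvd_sub (hpa.mul_right r) hpb)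

theorem exists_cofactor_root_of_discr_eq_sq {K : Type*} [Field K] {a b c r : K}
    (h2 : (2 : K) ≠ 0) (hc : c ≠ 0) (hdiscr : 4 * a ^ 3 - 27 * b ^ 2 = c ^ 2)
    (hr : r ^ 3 - a * r + b = 0) : ∃ s, s ^ 2 + r * s + (r ^ 2 - a) = 0 := by
  have hb : b = a * r - r ^ 3 := by linear_combination hr
  have hfactor : c ^ 2 = (4 * a - 3 * r ^ 2) * (3 * r ^ 2 - a) ^ 2 := by
    rw [← hdiscr, hb]; ring
  have hsimple : 3 * r ^ 2 - a ≠ 0 := fun h ↦ hc (by simpa [h] using hfactor)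
  -- The cofactor `X² + rX + (r² - a)` has discriminant `4a - 3r² = (c / (3r² - a))²`.
  refine ⟨(c / (3 * r ^ 2 - a) - r) / 2, ?_⟩
  field_simp
  linear_combination hfactor

variable [IsDomain R] [IsIntegrallyClosed R]

theorem irreducible_cubic_iff_forall_ne_zero (K : Type*) [Field K] [Algebra R K]
    [IsFractionRing R K] (a b : R) :
    Irreducible (X ^ 3 - C (algebraMap R K a) * X + C (algebraMap R K b)) ↔
      ∀ r : R, r ^ 3 - a * r + b ≠ 0 := by
  have monic : (X ^ 3 - C a * X + C b).Monic := by monicity!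
  have natDegree_eq : (X ^ 3 - C a * X + C b).natDegree = 3 := by compute_degree!
  have map_eq : (X ^ 3 - C a * X + C b).map (algebraMap R K) =
      X ^ 3 - C (algebraMap R K a) * X + C (algebraMap R K b) := by simp
  rw [← map_eq, ← monic.irreducible_iff_irreducible_map_fraction_map,
    monic.irreducible_iff_roots_eq_zero_of_degree_le_three (by lia) (by lia),
    Multiset.eq_zero_iff_forall_notMem]
  simp [mem_roots monic.ne_zero]

theorem exists_eq_of_cubic_eq_zero_of_discr_eq_sq {a b c r : R} (h2 : (2 : R) ≠ 0) (hc : c ≠ 0)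
    (hdiscr : 4 * a ^ 3 - 27 * b ^ 2 = c ^ 2) (hr : r ^ 3 - a * r + b = 0) :
    ∃ s, a = r ^ 2 + r * s + s ^ 2 ∧ b = r * s * (r + s) := by
  let φ : R →+* FractionRing R := algebraMap R (FractionRing R)
  have inj : Function.Injective φ := IsFractionRing.injective R (FractionRing R)
  have h2_frac : (2 : FractionRing R) ≠ 0 := by
    simpa only [map_ofNat] using (map_ne_zero_iff φ inj).2 h2
  have hdiscr_frac : 4 * φ a ^ 3 - 27 * φ b ^ 2 = φ c ^ 2 := by
    simpa only [map_sub, map_mul, map_pow, map_ofNat] using congrArg φ hdiscr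
  have hr_frac : φ r ^ 3 - φ a * φ r + φ b = 0 := by simpa using congrArg φ hr
  obtain ⟨x, hx⟩ := exists_cofactor_root_of_discr_eq_sq h2_frac ((map_ne_zero_iff φ inj).2 hc)
    hdiscr_frac hr_frac
  have hx_integral : IsIntegral R x :=
    ⟨X ^ 2 + C r * X + C (r ^ 2 - a), by monicity!, by simpa [φ] using hx⟩
  obtain ⟨s, rfl⟩ := IsIntegrallyClosed.isIntegral_iff.1 hx_integral
  have hs : s ^ 2 + r * s + (r ^ 2 - a) = 0 := inj (by simpa [φ] using hx)
  exact ⟨s, by linear_combination -hs, by linear_combination hr - r * hs⟩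

theorem prime_sq_dvd_and_cube_dvd_of_cubic_eq_zero {p a b c r : R} (hp : Prime p)
    (hpa : p ∣ a) (hpb : p ∣ b) (h2 : (2 : R) ≠ 0) (hc : c ≠ 0)
    (hdiscr : 4 * a ^ 3 - 27 * b ^ 2 = c ^ 2) (hr : r ^ 3 - a * r + b = 0) :
    p ^ 2 ∣ a ∧ p ^ 3 ∣ b := by
  obtain ⟨s, ha, hb⟩ := exists_eq_of_cubic_eq_zero_of_discr_eq_sq h2 hc hdiscr hr
  have hs : s ^ 3 - a * s + b = 0 := by rw [ha, hb]; ring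
  obtain ⟨r', rfl⟩ := prime_dvd_of_cubic_eq_zero hp hpa hpb hr
  obtain ⟨s', rfl⟩ := prime_dvd_of_cubic_eq_zero hp hpa hpb hs
  exact ⟨⟨r' ^ 2 + r' * s' + s' ^ 2, by rw [ha]; ring⟩, ⟨r' * s' * (r' + s'), by rw [hb]; ring⟩⟩

theorem irreducible_cubic_of_prime_dvd (K : Type*) [Field K] [Algebra R K] [IsFractionRing R K]
    {p a b c : R} (hp : Prime p) (hpa : p ∣ a) (hpb : p ∣ b) (hmin : p ^ 2 ∣ a → ¬ p ^ 3 ∣ b)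
    (h2 : (2 : R) ≠ 0) (hc : c ≠ 0) (hdiscr : 4 * a ^ 3 - 27 * b ^ 2 = c ^ 2) :
    Irreducible (X ^ 3 - C (algebraMap R K a) * X + C (algebraMap R K b)) := by
  refine (irreducible_cubic_iff_forall_ne_zero K a b).2 fun r hr ↦ ?_
  obtain ⟨hpa2, hpb3⟩ := prime_sq_dvd_and_cube_dvd_of_cubic_eq_zero hp hpa hpb h2 hc hdiscr hr
  exact hmin hpa2 hpb3

end DepressedCubic

theorem pow_dvd_gcd_iff_of_pow_dvd_right {a b : ℤ} {n k : ℕ} (h : (n : ℤ) ^ k ∣ b) :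
    n ^ k ∣ Int.gcd a b ↔ (n : ℤ) ^ k ∣ a := by
  rw [← Int.natCast_dvd_natCast, Nat.cast_pow, Int.dvd_coe_gcd_iff, and_iff_left h]

theorem mem_X1Dstar_iff {D : ℕ} {a b c : ℤ} :
    (c, b, a) ∈ X1Dstar D ↔ b ≠ 0 ∧ Int.gcd a b = D ∧
      (c ≠ 0 ∧ 4 * a ^ 3 - 27 * b ^ 2 = c ^ 2) ∧
      ∀ ℓ : ℕ, ℓ.Prime → (ℓ : ℤ) ^ 2 ∣ a → ¬ (ℓ : ℤ) ^ 3 ∣ b := by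
  have dvd_gcd_iff {n : ℕ} (h : (n : ℤ) ^ 3 ∣ b) : n ^ 2 ∣ Int.gcd a b ↔ (n : ℤ) ^ 2 ∣ a :=
    pow_dvd_gcd_iff_of_pow_dvd_right ((pow_dvd_pow _ (by norm_num)).trans h)
  simp only [X1Dstar, X1D, Set.mem_ofPred_eq, Int.gcd_comm b a, mul_ne_zero_iff]
  constructor
  · rintro ⟨⟨⟨⟨hc, hb⟩, -⟩, heq, rfl⟩, hmin⟩
    exact ⟨hb, rfl, ⟨hc, by linarith⟩, fun ℓ hℓ ha h ↦ hmin ℓ hℓ ((dvd_gcd_iff h).2 ha) h⟩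
  · rintro ⟨hb, rfl, ⟨hc, hdiscr⟩, hmin⟩
    have ha : a ≠ 0 := by
      rintro rfl
      nlinarith [sq_nonneg b, sq_pos_of_ne_zero hc]
    exact ⟨⟨⟨⟨hc, hb⟩, ha⟩, by linarith, rfl⟩, fun ℓ hℓ hD h ↦ hmin ℓ hℓ ((dvd_gcd_iff h).1 hD) h⟩

open Polynomial in
theorem stmt_19_general (D : ℕ) (hD : D ≠ 1) (a b : ℤ) :
    (Irreducible (X ^ 3 - C (a : ℚ) * X + C (b : ℚ)) ∧ Int.gcd a b = D ∧
      (∃ c : ℤ, c ≠ 0 ∧ 4 * a ^ 3 - 27 * b ^ 2 = c ^ 2) ∧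
      (∀ ℓ : ℕ, ℓ.Prime → (ℓ : ℤ) ^ 2 ∣ a → ¬ ((ℓ : ℤ) ^ 3 ∣ b))) ↔
    (∃ c : ℤ, (c, b, a) ∈ X1Dstar D) := by
  simp only [mem_X1Dstar_iff]
  constructor
  · rintro ⟨hirr, hgcd, ⟨c, hdiscr⟩, hmin⟩
    have hb : b ≠ 0 := by
      simpa using (irreducible_cubic_iff_forall_ne_zero ℚ a b).1 hirr 0
    exact ⟨c, hb, hgcd, hdiscr, hmin⟩
  · rintro ⟨c, -, hgcd, hdiscr, hmin⟩
    obtain ⟨p, hp, hpD⟩ := Nat.exists_prime_and_dvd hD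
    obtain ⟨hpa, hpb⟩ : (p : ℤ) ∣ a ∧ (p : ℤ) ∣ b := by
      rwa [← Int.dvd_coe_gcd_iff, hgcd, Int.natCast_dvd_natCast]
    have hirr := irreducible_cubic_of_prime_dvd ℚ (Nat.prime_iff_prime_int.1 hp) hpa hpb
      (hmin p hp) two_ne_zero hdiscr.1 hdiscr.2
    exact ⟨hirr, hgcd, ⟨c, hdiscr⟩, hmin⟩

open Polynomial in
theorem stmt_19 (D : ℕ) (hD : Admissible D) (hD1 : 1 < D) (a b : ℤ) :
    (Irreducible (X ^ 3 - C (a : ℚ) * X + C (b : ℚ)) ∧ Int.gcd a b = D ∧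
      (∃ c : ℤ, c ≠ 0 ∧ 4 * a ^ 3 - 27 * b ^ 2 = c ^ 2) ∧
      (∀ ℓ : ℕ, ℓ.Prime → (ℓ : ℤ) ^ 2 ∣ a → ¬ ((ℓ : ℤ) ^ 3 ∣ b))) ↔
    (∃ c : ℤ, (c, b, a) ∈ X1Dstar D) :=
  stmt_19_general D hD1.ne' a b
end
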